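/- arXiv:math/9907090 — 16 statements merged into one kernel-verified Lean document; each statement's English description precedes it below -/
import Mathlib

section
/- Let Φ be a family of real sequences each tending to ∞, satisfying condition (C), let d be an extended real number (d ∈ ℝ ∪ {−∞, ∞}), and let f : ℝ → ℝ be continuous. If for every sequence (x_n) belonging to Φ the sequence (f(x_n)) converges to d (in the extended reals), then f(x) converges to d as x → ∞. -/
open Filter Set

/-- The sequence `a` tends to `∞`. -/
def TendsToInfty (a : ℕ → ℝ) : Prop := Filter.Tendsto a Filter.atTop Filter.atTop

/-- Condition (C): for every open set `U ⊆ ℝ` unbounded above, some sequence of `Φ`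
has infinitely many terms in `U`. -/
def CondC (Φ : Set (ℕ → ℝ)) : Prop :=
  ∀ U : Set ℝ, IsOpen U → ¬ BddAbove U → ∃ a ∈ Φ, {n : ℕ | a n ∈ U}.Infinite

/-- Condition (1): the family `{f_a : a ∈ Φ}` is bounded with respect to eventual
domination, stated without defining `f_a`. -/
def Cond1 (Φ : Set (ℕ → ℝ)) : Prop :=
  ∃ g : ℕ → ℕ, ∀ a ∈ Φ, ∀ᶠ i : ℕ in Filter.atTop, ∀ j : ℕ, 1 ≤ j →
    Set.Ioi (i : ℝ) ⊆ ⋃ n : ℕ, Set.Ioo (a n - 1 / j) (a n + 1 / j) → j ≤ g i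

/-- Condition (2): `0 < a (n+1) - a n ≤ a n - a (n-1)` for all `n ≥ 1`. -/
def Cond2 (a : ℕ → ℝ) : Prop :=
  ∀ n : ℕ, 0 < a (n + 2) - a (n + 1) ∧ a (n + 2) - a (n + 1) ≤ a (n + 1) - a n

/-- Condition (3): the gaps of `a` are bounded below by a positive constant. -/
def Cond3 (a : ℕ → ℝ) : Prop :=
  ∃ r : ℝ, 0 < r ∧ ∀ n : ℕ, r < a (n + 1) - a n

/-- Condition (C_m): for every interlaced pair of sequences `x, y` tending to `∞`,
some `a ∈ Φ` has, for infinitely many `k`, at least `m` terms in `(x k, y k)`. -/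
def CondCm (m : ℕ) (Φ : Set (ℕ → ℝ)) : Prop :=
  ∀ x y : ℕ → ℝ, (∀ k, x k < y k) → (∀ k, y k < x (k + 1)) →
    Filter.Tendsto x Filter.atTop Filter.atTop →
    ∃ a ∈ Φ, {k : ℕ | ∃ s : Finset ℕ, m ≤ s.card ∧
      ∀ n ∈ s, a n ∈ Set.Ioo (x k) (y k)}.Infinite

/-- `non(M)`: the least cardinality of a non-meagre subset of `ℝ`. -/
noncomputable def nonMeagreCard : Cardinal :=
  sInf {c : Cardinal | ∃ X : Set ℝ, ¬ IsMeagre X ∧ c = Cardinal.mk X}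

/-- The bounding number `b`. -/
noncomputable def boundingNumber : Cardinal :=
  sInf {c : Cardinal | ∃ F : Set (ℕ → ℕ),
    (¬ ∃ g : ℕ → ℕ, ∀ f ∈ F, {i : ℕ | g i < f i}.Finite) ∧ c = Cardinal.mk F}

theorem proposition1 (Φ : Set (ℕ → ℝ)) (hΦ : ∀ a ∈ Φ, TendsToInfty a)
    (hC : CondC Φ) (d : EReal) (f : ℝ → ℝ) (hf : Continuous f)
    (hconv : ∀ a ∈ Φ, Filter.Tendsto (fun n : ℕ => ((f (a n) : ℝ) : EReal))
      Filter.atTop (nhds d)) :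
    Filter.Tendsto (fun x : ℝ => ((f x : ℝ) : EReal)) Filter.atTop (nhds d) := by
  -- It suffices to test closed neighbourhoods `V` of `d`; for these the set where `f` leaves `V`
  -- is open by continuity, so condition (C) applies to it as soon as it is unbounded.
  refine (closed_nhds_basis d).tendsto_right_iff.2 fun V ⟨hV, hVc⟩ => ?_
  by_contra hne
  have hfreq : ∃ᶠ x : ℝ in atTop, ((f x : ℝ) : EReal) ∉ V := not_eventually.1 hne
  obtain ⟨a, ha, hinf⟩ := hC {x : ℝ | ((f x : ℝ) : EReal) ∉ V}
    (hVc.isOpen_compl.preimage (continuous_coe_real_ereal.comp hf)) (by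
      rintro ⟨M, hM⟩
      obtain ⟨x, hx, hxV⟩ := (frequently_atTop'.1 hfreq) M
      exact absurd (hM hxV) (not_le.2 hx))
  exact Nat.frequently_atTop_iff_infinite.2 hinf
    (((hconv a ha).eventually hV).mono fun _ hn hU => hU hn)
end

section
/- Let Φ be a family of real sequences each tending to ∞ and let d be an extended real number (d ∈ ℝ ∪ {−∞, ∞}). Assume that for every continuous f : ℝ → ℝ, if the sequence (f(x_n)) converges to d (in the extended reals) for every sequence (x_n) belonging to Φ, then f(x) converges to d as x → ∞. Then Φ satisfies condition (C). -/
/-!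
The proof is by contraposition. Suppose `U` is open and unbounded above, and every `a ∈ Φ` has
only finitely many terms in `U`. Choose points `x k ∈ U` with `k < x k`; their range is closed, so
Urysohn's lemma gives a continuous `ψ` equal to `0` off `U` and to `1` at every `x k`. Let `g` be
continuous with `g → d` at `∞`, and let `c ≠ d` be real (`exists_continuous_tendsto_ereal`). The
function `(1 - ψ) g + ψ c` agrees with `g` off `U`, so it tends to `d` along every member of `Φ`,
but it equals `c` at every `x k`, so it does not tend to `d` at `∞`.
-/

open Filter Set

lemma exists_continuous_tendsto_ereal (d : EReal) :
    ∃ (g : ℝ → ℝ) (c : ℝ), Continuous g ∧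
      Tendsto (fun x : ℝ => ((g x : ℝ) : EReal)) atTop (nhds d) ∧ (c : EReal) ≠ d := by
  induction d with
  | bot =>
    exact ⟨fun x => -x, 0, continuous_neg,
      EReal.tendsto_coe_nhds_bot_iff.2 tendsto_neg_atTop_atBot, EReal.coe_ne_bot 0⟩
  | coe r =>
    refine ⟨fun _ => r, r + 1, continuous_const, tendsto_const_nhds, fun hr => ?_⟩
    have := EReal.coe_injective hr
    linarith
  | top =>
    exact ⟨fun x => x, 0, continuous_id,
      EReal.tendsto_coe_nhds_top_iff.2 tendsto_id, EReal.coe_ne_top 0⟩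

/-- A sequence of reals tending to `∞` is a proper map from the discrete space `ℕ`, so its range
is closed. -/
lemma isClosed_range_of_tendsto_atTop {x : ℕ → ℝ} (hx : Tendsto x atTop atTop) :
    IsClosed (range x) := by
  have hp : IsProperMap x := by
    refine isProperMap_iff_tendsto_cocompact.2 ⟨continuous_of_discreteTopology, ?_⟩
    rw [cocompact_eq_cofinite, Nat.cofinite_eq_atTop]
    exact hx.mono_right atTop_le_cocompact
  exact hp.isClosedMap.isClosed_range

theorem proposition2 (Φ : Set (ℕ → ℝ)) (hΦ : ∀ a ∈ Φ, TendsToInfty a) (d : EReal)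
    (h : ∀ f : ℝ → ℝ, Continuous f →
      (∀ a ∈ Φ, Filter.Tendsto (fun n : ℕ => ((f (a n) : ℝ) : EReal))
        Filter.atTop (nhds d)) →
      Filter.Tendsto (fun x : ℝ => ((f x : ℝ) : EReal)) Filter.atTop (nhds d)) :
    CondC Φ := by
  intro U hU hUb
  by_contra hcon
  have hfin : ∀ a ∈ Φ, {n : ℕ | a n ∈ U}.Finite := fun a ha =>
    Set.not_infinite.1 fun hi => hcon ⟨a, ha, hi⟩
  have hex : ∀ k : ℕ, ∃ y ∈ U, (k : ℝ) < y := fun k => not_bddAbove_iff.1 hUb k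
  choose x hxU hxk using hex
  have hx : Tendsto x atTop atTop :=
    tendsto_atTop_mono (fun k => (hxk k).le) tendsto_natCast_atTop_atTop
  have hdisj : Disjoint Uᶜ (range x) := by
    rw [Set.disjoint_right]
    rintro _ ⟨k, rfl⟩ hk
    exact hk (hxU k)
  obtain ⟨ψ, hψ0, hψ1, -⟩ := exists_continuous_zero_one_of_isClosed hU.isClosed_compl
    (isClosed_range_of_tendsto_atTop hx) hdisj
  obtain ⟨g, c, hg, hgd, hc⟩ := exists_continuous_tendsto_ereal d
  have hlim := h (fun t => (1 - ψ t) * g t + ψ t * c) (by fun_prop) (by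
    intro a ha
    refine (hgd.comp (hΦ a ha)).congr' ?_
    have hev : ∀ᶠ n in atTop, a n ∉ U := by
      rw [← Nat.cofinite_eq_atTop]
      exact (hfin a ha).eventually_cofinite_notMem
    filter_upwards [hev] with n hn
    have h0 : ψ (a n) = 0 := hψ0 hn
    simp [h0])
  refine hc (tendsto_nhds_unique (tendsto_const_nhds (f := atTop (α := ℕ))) ?_)
  refine (hlim.comp hx).congr fun k => ?_
  have h1 : ψ (x k) = 1 := hψ1 (mem_range_self k)
  have h2 : (1 - ψ (x k)) * g (x k) + ψ (x k) * c = c := by simp [h1]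
  exact congrArg Real.toEReal h2
end

section
/- Let Φ be a family of real sequences each tending to ∞. Assume: (C) for every open set U ⊆ ℝ unbounded above some sequence in Φ has infinitely many terms in U; (1) the family {f_{a} : a ∈ Φ} is bounded, i.e. there exists g : ℕ → ℕ such that for every a ∈ Φ, for all but finitely many i ∈ ℕ and every j ≥ 1, if the interval (i, ∞) is contained in ⋃_{n∈ℕ} (a(n) − 1/j, a(n) + 1/j) then j ≤ g(i); (2) every a ∈ Φ satisfies 0 < a(n+1) − a(n) ≤ a(n) − a(n−1) for all n ≥ 1. Then the cardinality of Φ is at least non(M), the minimum of the cardinalities of non-meagre subsets of ℝ. -/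
/-!
Let `ι` index a family of functions `f i : ℕ → ℕ` that *guesses* every `y : ℕ → ℕ`, meaning that
some `f i` agrees with `y` infinitely often. Bartoszyński's theorem says that such a family has at
least `non(M)` members. The proof here shows this theorem and that `Φ` yields a guessing family
indexed by `Φ`.

*From `Φ` to a guessing family* (`exists_guesses_of_condC`). The gaps of `a ∈ Φ` decrease, so a
small gap before `k + 1` would make the tail of `a` dense enough beyond `k + 1` to violate (1).
Hence, for all large `k`, `a` has at most `N k = g (k + 1) + 1` terms in `(k, k + 1)`, with `N`
independent of `a` (`index_lt_of_mem_unit`). The unit interval `(k, k + 1)` contains infinitely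
many disjoint open cells `cell k c`. Given `y`, pick in each unit interval the cell whose number
codes the list `y (k, 0), …, y (k, N k - 1)`. By (C) some `a` meets these cells infinitely often.
If the `i`-th term of `a` beyond `k` lies in the chosen cell, the `i`-th entry of the list coded by
its cell is `y (k, i)`, so reading off that entry is a guess which is right infinitely often.

*From a guessing family to a non-meagre set* (`exists_patterns`, `nonMeagreCard_le_of_guesses`).
A dense open set of reals contains every number whose binary digits on a suitable block `[n, N n)`
follow a prescribed pattern, because there are only finitely many possible digit strings below `n`
(`exists_block_of_dense_open`). So it suffices to find `card ι` many digit sequences such that for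
all `N` and all patterns one of them follows the patterns on infinitely many blocks. One member of
the family guesses `N ∘ N`, and yields an interval partition infinitely many of whose intervals
contain a block (`exists_good_blocks`). A second one guesses, at place `j`, the required digits on
`j + 1` such intervals simultaneously. Of these, at least one has not been used by the first `j`
guesses, so it can be assigned to the `j`-th guess (`pick`).
-/

open Filter Set

/-- Every function `ℕ → ℕ` agrees infinitely often with a member of the family `f`. -/
def Guesses {ι : Type*} (f : ι → ℕ → ℕ) : Prop :=
  ∀ y : ℕ → ℕ, ∃ i, {n | f i n = y n}.Infinite

/-! ### Guessing families give non-meagre sets -/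

/-- The endpoints of the interval partition of `ℕ` determined by `u`: each endpoint exceeds all
values of `u` up to the previous endpoint. -/
def blockEnd (u : ℕ → ℕ) : ℕ → ℕ
  | 0 => 0
  | m + 1 => blockEnd u m + 1 + ∑ l ∈ Finset.range (blockEnd u m + 1), u l

lemma blockEnd_strictMono (u : ℕ → ℕ) : StrictMono (blockEnd u) :=
  strictMono_nat_of_lt_succ fun m => by simp only [blockEnd]; omega

lemma lt_blockEnd_succ (u : ℕ → ℕ) {m n : ℕ} (h : n ≤ blockEnd u m) :
    u n < blockEnd u (m + 1) := by
  have : u n ≤ ∑ l ∈ Finset.range (blockEnd u m + 1), u l :=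
    Finset.single_le_sum (f := u) (fun _ _ => Nat.zero_le _) (Finset.mem_range.2 (by omega))
  simp only [blockEnd]; omega

/-- If `u` guesses `N ∘ N` infinitely often, then infinitely many intervals of the partition
determined by `u` contain a whole block `[n, N n)`. -/
lemma exists_good_blocks {u N : ℕ → ℕ} (hN : Monotone N)
    (hu : {n | u n = N (N n)}.Infinite) :
    {m | ∃ n, blockEnd u m ≤ n ∧ N n ≤ blockEnd u (m + 1)}.Infinite := by
  rw [← Nat.frequently_atTop_iff_infinite, frequently_atTop] at hu ⊢
  intro B
  obtain ⟨n, hn, hun⟩ := hu (blockEnd u B)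
  have hmono := blockEnd_strictMono u
  obtain ⟨m, hm1, hm2⟩ : ∃ m, blockEnd u m ≤ n ∧ n < blockEnd u (m + 1) := by
    have hex : ∃ k, n < blockEnd u k := ⟨n + 1, (Nat.lt_succ_self n).trans_le (hmono.le_apply)⟩
    classical
    have h0 : Nat.find hex ≠ 0 := by
      intro h
      have := Nat.find_spec hex
      rw [h] at this
      simp [blockEnd] at this
    obtain ⟨m, hm⟩ := Nat.exists_eq_succ_of_ne_zero h0
    refine ⟨m, ?_, ?_⟩
    · have := Nat.find_min hex (m := m) (by omega)
      omega
    · have := Nat.find_spec hex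
      rwa [hm] at this
  have hBm : B ≤ m := by
    have : blockEnd u B < blockEnd u (m + 1) := hn.trans_lt hm2
    have := hmono.lt_iff_lt.1 this
    omega
  -- Either `[n, N n)` fits into the interval of `n`, or the block starting at the next endpoint
  -- fits into the next interval, which extends beyond `u n = N (N n)`.
  by_cases h : N n ≤ blockEnd u (m + 1)
  · exact ⟨m, hBm, n, hm1, h⟩
  · refine ⟨m + 1, by omega, blockEnd u (m + 1), le_rfl, ?_⟩
    have h1 := lt_blockEnd_succ u hm2.le
    have h2 : N (blockEnd u (m + 1)) ≤ N (N n) := hN (by omega)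
    have hun' : u n = N (N n) := hun
    omega

/-- Choose from each finite set `L j` of pairs one whose first component differs from those of
all earlier choices; if there is none, the choice is arbitrary. -/
noncomputable def pick (L : ℕ → Finset (ℕ × Finset ℕ)) (j : ℕ) : ℕ × Finset ℕ :=
  Classical.epsilon fun v => v ∈ L j ∧ ∀ i, ∀ _ : i < j, (pick L i).1 ≠ v.1
termination_by j

lemma pick_spec (L : ℕ → Finset (ℕ × Finset ℕ)) (j : ℕ)
    (h : j < ((L j).image Prod.fst).card) :
    pick L j ∈ L j ∧ ∀ i < j, (pick L i).1 ≠ (pick L j).1 := by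
  have hex : ∃ v : ℕ × Finset ℕ, v ∈ L j ∧ ∀ i, ∀ _ : i < j, (pick L i).1 ≠ v.1 := by
    have hlt : ((Finset.range j).image fun i => (pick L i).1).card
        < ((L j).image Prod.fst).card :=
      (Finset.card_image_le.trans (by simp)).trans_lt h
    obtain ⟨m, hm, hm'⟩ := Finset.exists_mem_notMem_of_card_lt_card hlt
    obtain ⟨v, hv, rfl⟩ := Finset.mem_image.1 hm
    refine ⟨v, hv, fun i hi he => hm' ?_⟩
    exact Finset.mem_image.2 ⟨i, Finset.mem_range.2 hi, he⟩
  have := Classical.epsilon_spec hex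
  rw [pick]
  exact this

/-- The set that, on the `m`-th interval of the partition determined by `u`, follows the first
pair `(m, w)` among the choices from `L`. -/
def patternSet (u : ℕ → ℕ) (L : ℕ → Finset (ℕ × Finset ℕ)) : Set ℕ :=
  {p | ∃ j, blockEnd u (pick L j).1 ≤ p ∧ p < blockEnd u ((pick L j).1 + 1) ∧
    p ∈ (pick L j).2 ∧ ∀ i < j, (pick L i).1 ≠ (pick L j).1}

lemma mem_patternSet_iff {u : ℕ → ℕ} {L : ℕ → Finset (ℕ × Finset ℕ)} {j p : ℕ}
    (hj : ∀ i < j, (pick L i).1 ≠ (pick L j).1)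
    (h1 : blockEnd u (pick L j).1 ≤ p) (h2 : p < blockEnd u ((pick L j).1 + 1)) :
    p ∈ patternSet u L ↔ p ∈ (pick L j).2 := by
  constructor
  · rintro ⟨j', h1', h2', hp, hj'⟩
    have hmono := blockEnd_strictMono u
    have e1 := hmono.lt_iff_lt.1 (h1.trans_lt h2')
    have e2 := hmono.lt_iff_lt.1 (h1'.trans_lt h2)
    have e : (pick L j').1 = (pick L j).1 := by omega
    rcases lt_trichotomy j j' with h | h | h
    · exact absurd e.symm (hj' j h)
    · rwa [h]
    · exact absurd e (hj j' h)
  · intro hp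
    exact ⟨j, h1, h2, hp, hj⟩

/-- A guessing family indexed by `ι` yields subsets of `ℕ`, indexed by `ι × ι`, one of which
agrees with `Z n` on `[n, N n)` for infinitely many `n`, whatever `N` and `Z` are. -/
lemma exists_patterns {ι : Type*} {f : ι → ℕ → ℕ} (hf : Guesses f) :
    ∃ x : ι × ι → Set ℕ, ∀ (N : ℕ → ℕ) (Z : ℕ → Set ℕ),
      ∃ q, {n | ∀ p, n ≤ p → p < N n → (p ∈ x q ↔ p ∈ Z n)}.Infinite := by
  obtain ⟨e, he⟩ := exists_surjective_nat (Finset (ℕ × Finset ℕ))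
  refine ⟨fun q => patternSet (f q.1) fun j => e (f q.2 j), fun N Z => ?_⟩
  -- Enlarging `N` to a monotone function only strengthens the requirement.
  set N' : ℕ → ℕ := fun n => ∑ l ∈ Finset.range (n + 1), N l with hN'
  have hN'mono : Monotone N' := fun a b hab =>
    Finset.sum_le_sum_of_subset (Finset.range_mono (by omega))
  have hNN' : ∀ n, N n ≤ N' n := fun n =>
    Finset.single_le_sum (f := N) (fun _ _ => Nat.zero_le _) (Finset.mem_range.2 (by omega))
  obtain ⟨i, hi⟩ := hf fun n => N' (N' n)
  have hD := exists_good_blocks hN'mono hi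
  set u := f i with hu
  set D := {m | ∃ n, blockEnd u m ≤ n ∧ N' n ≤ blockEnd u (m + 1)} with hDdef
  have hstart : ∀ m, ∃ n, m ∈ D → blockEnd u m ≤ n ∧ N' n ≤ blockEnd u (m + 1) := by
    intro m
    by_cases h : m ∈ D
    · obtain ⟨n, hn⟩ := h
      exact ⟨n, fun _ => hn⟩
    · exact ⟨0, fun h' => absurd h' h⟩
  choose s hs using hstart
  choose S hSD hScard using fun j : ℕ => hD.exists_subset_card_eq (j + 1)
  classical
  set W : ℕ → Finset ℕ := fun m =>
    (Finset.range (blockEnd u (m + 1))).filter fun p => p ∈ Z (s m) with hW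
  choose y hy using fun j : ℕ => he ((S j).image fun m => (m, W m))
  obtain ⟨i', hi'⟩ := hf y
  refine ⟨(i, i'), ?_⟩
  set L : ℕ → Finset (ℕ × Finset ℕ) := fun j => e (f i' j) with hL
  have key : ∀ j, f i' j = y j → (pick L j).1 ∈ D ∧ (pick L j).2 = W (pick L j).1 ∧
      ∀ k < j, (pick L k).1 ≠ (pick L j).1 := by
    intro j hj
    have hLj : L j = (S j).image fun m => (m, W m) := by simp only [hL, hj, hy]
    have himg : (L j).image Prod.fst = S j := by
      rw [hLj, Finset.image_image]
      exact Finset.image_id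
    obtain ⟨hp1, hp2⟩ := pick_spec L j (by rw [himg, hScard]; omega)
    rw [hLj] at hp1
    obtain ⟨m, hm, hme⟩ := Finset.mem_image.1 hp1
    refine ⟨?_, ?_, hp2⟩
    · rw [← hme]; exact hSD j hm
    · rw [← hme]
  have hinf : ((fun j => (pick L j).1) '' {j | f i' j = y j}).Infinite := by
    refine hi'.image ?_
    intro j hj k hk hjk
    rcases lt_trichotomy j k with h | h | h
    · exact absurd hjk ((key k hk).2.2 j h)
    · exact h
    · exact absurd hjk.symm ((key j hj).2.2 k h)
  rw [← Nat.frequently_atTop_iff_infinite, frequently_atTop]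
  intro B
  obtain ⟨m, ⟨j, hj, rfl⟩, hBm⟩ := hinf.exists_gt B
  obtain ⟨hmD, hmW, hfresh⟩ := key j hj
  obtain ⟨h1, h2⟩ := hs _ hmD
  refine ⟨s (pick L j).1, ?_, fun p hp1 hp2 => ?_⟩
  · exact hBm.le.trans (((blockEnd_strictMono u).le_apply).trans h1)
  · have hp3 : p < blockEnd u ((pick L j).1 + 1) := hp2.trans_le ((hNN' _).trans h2)
    have := mem_patternSet_iff (u := u) (L := L) hfresh (h1.trans hp1) hp3
    change p ∈ patternSet u L ↔ _
    rw [this, hmW]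
    simp [hW, hp3]

open Classical in
/-- The characteristic sequence of a set, as a sequence of binary digits. -/
noncomputable def bits (X : Set ℕ) : ℕ → Fin 2 := fun p => if p ∈ X then 1 else 0

/-- A dense open set contains every real whose binary digits on a suitable block `[n, N)` follow a
suitable pattern `Z`, irrespective of the digits before `n` and from `N` on. -/
lemma exists_block_of_dense_open {G : Set ℝ} (hGo : IsOpen G) (hGd : Dense G) (n : ℕ) :
    ∃ (N : ℕ) (Z : Set ℕ), ∀ X : Set ℕ, (∀ p, n ≤ p → p < N → (p ∈ X ↔ p ∈ Z)) →
      Real.ofDigits (bits X) ∈ G := by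
  -- The finitely many values of the first `n` digits.
  set A : Set ℝ := range fun x : ℕ → Fin 2 => ∑ i ∈ Finset.range n, Real.ofDigitsTerm x i with hA
  have hAfin : A.Finite := by
    refine (Set.finite_range fun x : Fin n → Fin 2 =>
      ∑ i : Fin n, ((x i : ℕ) : ℝ) * (((2 : ℕ) : ℝ) ^ ((i : ℕ) + 1))⁻¹).subset ?_
    rintro _ ⟨x, rfl⟩
    refine ⟨fun i => x i, ?_⟩
    simp only [Finset.sum_range, Real.ofDigitsTerm]
  set c : ℝ := (((2 : ℕ) : ℝ) ^ n)⁻¹ with hc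
  have hc0 : c ≠ 0 := by positivity
  set φ : ℝ → ℝ ≃ₜ ℝ := fun t => (Homeomorph.mulLeft₀ c hc0).trans (Homeomorph.addLeft t) with hφ
  have hφa : ∀ t v, φ t v = t + c * v := fun t v => rfl
  set V : Set ℝ := ⋂ t ∈ A, φ t ⁻¹' G with hV
  have hVo : IsOpen V := hAfin.isOpen_biInter fun t _ => hGo.preimage (φ t).continuous
  have hVd : Dense V := dense_biInter_of_isOpen (fun t _ => hGo.preimage (φ t).continuous)
    hAfin.countable fun t _ => hGd.preimage (φ t).isOpenMap
  obtain ⟨v, hv01, hvV⟩ := hVd.inter_open_nonempty (Ioo 0 1) isOpen_Ioo ⟨1 / 2, by norm_num⟩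
  obtain ⟨ε, hε, hball⟩ := Metric.isOpen_iff.1 hVo v hvV
  obtain ⟨M, hM⟩ := exists_pow_lt_of_lt_one hε (show (1 / 2 : ℝ) < 1 by norm_num)
  set d := Real.digits v 2 with hd
  have hdv : Real.ofDigits d = v := Real.ofDigits_digits (by norm_num) ⟨hv01.1.le, hv01.2⟩
  refine ⟨n + M, {p | d (p - n) = 1}, fun X hX => ?_⟩
  rw [Real.ofDigits_eq_sum_add_ofDigits _ n]
  have hmem : Real.ofDigits (fun i => bits X (i + n)) ∈ V := by
    apply hball
    rw [Metric.mem_ball, Real.dist_eq, ← hdv]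
    refine lt_of_le_of_lt (Real.abs_ofDigits_sub_ofDigits_le (n := M) ?_) ?_
    · intro i hi
      have := hX (i + n) (by omega) (by omega)
      simp only [mem_ofPred_eq, Nat.add_sub_cancel] at this
      simp only [bits, this]
      generalize d i = z
      fin_cases z <;> simp
    · simpa using hM
  have := mem_iInter₂.1 hmem _ ⟨bits X, rfl⟩
  exact this

/-- Bartoszyński's theorem: a guessing family has at least `non(M)` members. -/
theorem nonMeagreCard_le_of_guesses {ι : Type} {f : ι → ℕ → ℕ} (hf : Guesses f) :
    nonMeagreCard ≤ Cardinal.mk ι := by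
  obtain ⟨x, hx⟩ := exists_patterns hf
  set R : Set ℝ := range fun q => Real.ofDigits (bits (x q)) with hR
  have hRm : ¬ IsMeagre R := by
    intro hm
    rw [IsMeagre, mem_residual_iff] at hm
    obtain ⟨S, hSo, hSd, hSc, hSR⟩ := hm
    -- Adding the whole space makes `S` nonempty, so that it can be enumerated.
    obtain ⟨G, hG⟩ := (hSc.insert univ).exists_eq_range (insert_nonempty _ _)
    have hGS : ∀ k, G k = univ ∨ G k ∈ S := fun k => by
      have : G k ∈ insert univ S := hG ▸ mem_range_self k
      simpa using this
    have hGo : ∀ k, IsOpen (G k) := fun k => by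
      rcases hGS k with h | h
      · rw [h]; exact isOpen_univ
      · exact hSo _ h
    have hGd : ∀ k, Dense (G k) := fun k => by
      rcases hGS k with h | h
      · rw [h]; exact dense_univ
      · exact hSd _ h
    have hfin : ∀ n : ℕ, (Iic n).Finite := fun n => finite_Iic n
    choose N Z hNZ using fun n : ℕ => exists_block_of_dense_open
      (G := ⋂ k ∈ Iic n, G k) ((hfin n).isOpen_biInter fun k _ => hGo k)
      (dense_biInter_of_isOpen (fun k _ => hGo k) (hfin n).countable fun k _ => hGd k) n
    obtain ⟨q, hq⟩ := hx N Z
    have hqR : Real.ofDigits (bits (x q)) ∈ Rᶜ := by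
      apply hSR
      intro t ht
      obtain ⟨k, rfl⟩ : t ∈ range G := hG ▸ mem_insert_of_mem _ ht
      rw [← Nat.frequently_atTop_iff_infinite, frequently_atTop] at hq
      obtain ⟨n, hkn, hn⟩ := hq k
      exact mem_iInter₂.1 (hNZ n (x q) hn) k hkn
    exact hqR ⟨q, rfl⟩
  have hle : nonMeagreCard ≤ Cardinal.mk R := csInf_le' ⟨R, hRm, rfl⟩
  have hle2 : Cardinal.mk R ≤ Cardinal.mk ι * Cardinal.mk ι := by
    refine Cardinal.mk_range_le.trans_eq ?_
    simp
  have hinf : Infinite ι := by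
    by_contra hfin
    rw [not_infinite_iff_finite] at hfin
    apply hRm
    have hRc : R.Countable := (finite_range _).countable
    rw [← biUnion_of_singleton R]
    exact isMeagre_biUnion hRc fun r _ => IsNowhereDense.isMeagre (by
      simp [IsNowhereDense])
  exact hle.trans (hle2.trans_eq (Cardinal.mul_eq_self (Cardinal.aleph0_le_mk ι)))

/-! ### The guessing family of `Φ` -/

/-- The cells `cell k 0`, `cell k 1`, … are disjoint open intervals in `(k, k + 1)`. -/
def cell (k c : ℕ) : Set ℝ := Ioo (k + 1 / ((c : ℝ) + 2)) (k + 1 / ((c : ℝ) + 1))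

/-- The number `c` of the cell `cell k c` containing `t`, if there is one. -/
noncomputable def cellIndex (k : ℕ) (t : ℝ) : ℕ := ⌊(t - k)⁻¹⌋₊ - 1

lemma cellIndex_eq {k c : ℕ} {t : ℝ} (h : t ∈ cell k c) : cellIndex k t = c := by
  obtain ⟨h1, h2⟩ := h
  have hc2 : (0 : ℝ) < (c : ℝ) + 2 := by positivity
  have hc1 : (0 : ℝ) < (c : ℝ) + 1 := by positivity
  have hpos : 0 < t - k := by
    have : 0 < 1 / ((c : ℝ) + 2) := by positivity
    linarith
  have e1 : (c : ℝ) + 1 ≤ (t - k)⁻¹ := by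
    rw [le_inv_comm₀ hc1 hpos, ← one_div]; linarith
  have e2 : (t - k)⁻¹ < (c : ℝ) + 2 := by
    rw [inv_lt_comm₀ hpos hc2, ← one_div]; linarith
  have : ⌊(t - k)⁻¹⌋₊ = c + 1 := by
    rw [Nat.floor_eq_iff (inv_nonneg.2 hpos.le)]
    push_cast
    exact ⟨e1, by linarith⟩
  simp [cellIndex, this]

lemma cell_subset (k c : ℕ) : cell k c ⊆ Ioo (k : ℝ) (k + 1) := by
  rintro t ⟨h1, h2⟩
  have e1 : 0 < 1 / ((c : ℝ) + 2) := by positivity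
  have e2 : 1 / ((c : ℝ) + 1) ≤ 1 := by
    rw [div_le_one (by positivity)]
    have : (0 : ℝ) ≤ c := by positivity
    linarith
  exact ⟨by linarith, by linarith⟩

lemma cell_nonempty (k c : ℕ) : (cell k c).Nonempty := by
  refine nonempty_Ioo.2 ?_
  gcongr
  norm_num

/-- The gaps of a sequence satisfying condition (2) decrease. -/
lemma Cond2.antitone {a : ℕ → ℝ} (h : Cond2 a) : Antitone fun n => a (n + 1) - a n :=
  antitone_nat_of_succ_le fun n => (h n).2

/-- The index of the first term of `a` that is at least `k`. -/
noncomputable def firstIndex (a : ℕ → ℝ) (k : ℕ) : ℕ := sInf {n | (k : ℝ) ≤ a n}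

/-- If the balls of radius `1 / j` around the terms of `a` do not cover `(k + 1, ∞)`, then among
the terms from `k` on only the first `j` can lie below `k + 1`. -/
lemma index_lt_of_mem_unit {a : ℕ → ℝ} (ha : TendsToInfty a) (h2 : Cond2 a) {k j n : ℕ}
    (hj : 1 ≤ j)
    (hcov : ¬ Ioi ((k + 1 : ℕ) : ℝ) ⊆ ⋃ n : ℕ, Ioo (a n - 1 / j) (a n + 1 / j))
    (hn1 : (k : ℝ) ≤ a n) (hn2 : a n < k + 1) : n < firstIndex a k + j := by
  have hanti := h2.antitone
  have hj0 : (0 : ℝ) < j := by exact_mod_cast hj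
  -- A gap below `1 / j` after `n` would persist, and the terms from `n` on would cover.
  have hgap : 1 / (j : ℝ) ≤ a (n + 1) - a n := by
    by_contra hlt
    push Not at hlt
    apply hcov
    intro t ht
    have ht' : (k : ℝ) + 1 < t := by simpa using ht
    have hex : ∃ m, t < a (n + m) := by
      obtain ⟨m, hm, hm'⟩ := ((ha.eventually (eventually_gt_atTop t)).and
        (eventually_ge_atTop n)).exists
      exact ⟨m - n, by rwa [Nat.add_sub_cancel' hm']⟩
    classical
    have h0 : Nat.find hex ≠ 0 := by
      intro h
      have := Nat.find_spec hex
      rw [h, Nat.add_zero] at this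
      linarith
    obtain ⟨m, hm⟩ := Nat.exists_eq_succ_of_ne_zero h0
    have e1 : a (n + m) ≤ t := not_lt.1 (Nat.find_min hex (m := m) (by omega))
    have e2 : t < a (n + m + 1) := by
      have := Nat.find_spec hex
      rwa [hm] at this
    have e3 : a (n + m + 1) - a (n + m) ≤ a (n + 1) - a n := hanti (by omega)
    have e4 : 0 < 1 / (j : ℝ) := by positivity
    exact mem_iUnion.2 ⟨n + m, by linarith, by linarith⟩
  have hfirst : (k : ℝ) ≤ a (firstIndex a k) :=
    Nat.sInf_mem (s := {n | (k : ℝ) ≤ a n}) ⟨n, hn1⟩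
  have hle : firstIndex a k ≤ n := Nat.sInf_le hn1
  have hsum : ∀ i, firstIndex a k + i ≤ n →
      a (firstIndex a k) + i * (1 / (j : ℝ)) ≤ a (firstIndex a k + i) := by
    intro i
    induction i with
    | zero => intro _; simp
    | succ i ih =>
      intro hi
      have h3 := ih (by omega)
      have h4 : a (n + 1) - a n ≤ a (firstIndex a k + i + 1) - a (firstIndex a k + i) :=
        hanti (by omega)
      rw [← add_assoc]
      push_cast
      linarith
  by_contra hge
  push Not at hge
  obtain ⟨i, rfl⟩ := Nat.exists_eq_add_of_le hle
  have h5 := hsum i le_rfl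
  have hji : (j : ℝ) ≤ i := by exact_mod_cast (show j ≤ i by omega)
  have h6 : 1 ≤ (i : ℝ) * (1 / j) := by
    rw [mul_one_div, le_div_iff₀ hj0]; linarith
  linarith

/-- The guess made by `a` at the pair `(k, i)`: the `i`-th entry of the list coded by the number of
the cell in `(k, k + 1)` containing the `i`-th term of `a` from `k` on. -/
noncomputable def guess (a : ℕ → ℝ) (p : ℕ) : ℕ :=
  (Denumerable.ofNat (List ℕ) (cellIndex p.unpair.1
    (a (firstIndex a p.unpair.1 + p.unpair.2)))).getD p.unpair.2 0

lemma exists_guesses_of_condC (Φ : Set (ℕ → ℝ)) (hΦ : ∀ a ∈ Φ, TendsToInfty a)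
    (hC : CondC Φ) (h1 : Cond1 Φ) (h2 : ∀ a ∈ Φ, Cond2 a) :
    Guesses fun a : Φ => guess a := by
  intro y
  obtain ⟨g, hg⟩ := h1
  set c : ℕ → ℕ := fun k =>
    Encodable.encode ((List.range (g (k + 1) + 1)).map fun i => y (Nat.pair k i)) with hc
  obtain ⟨a, haΦ, ha⟩ := hC (⋃ k, cell k (c k)) (isOpen_iUnion fun k => isOpen_Ioo) (by
    rintro ⟨B, hB⟩
    obtain ⟨k, hk⟩ := exists_nat_gt B
    obtain ⟨t, ht⟩ := cell_nonempty k (c k)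
    have := hB (mem_iUnion.2 ⟨k, ht⟩)
    have := (cell_subset _ _ ht).1
    linarith)
  refine ⟨⟨a, haΦ⟩, ?_⟩
  obtain ⟨K, hK⟩ := eventually_atTop.1 (hg a haΦ)
  rw [← Nat.frequently_atTop_iff_infinite] at ha ⊢
  rw [frequently_atTop]
  intro B
  obtain ⟨n, hnU, hn⟩ := (ha.and_eventually ((hΦ a haΦ).eventually
    (eventually_ge_atTop ((max B K : ℕ) + 1 : ℝ)))).exists
  obtain ⟨k, hk⟩ := mem_iUnion.1 hnU
  obtain ⟨hk1, hk2⟩ := cell_subset _ _ hk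
  have hkBK : max B K < k := by
    have : ((max B K : ℕ) : ℝ) < k := by linarith
    exact_mod_cast this
  have hKk : K ≤ k + 1 := by have := le_max_right B K; omega
  have hlt := index_lt_of_mem_unit (hΦ a haΦ) (h2 a haΦ) (j := g (k + 1) + 1) (by omega)
    (fun hcov => by have := hK (k + 1) hKk _ (by omega) hcov; omega) hk1.le hk2
  have hle : firstIndex a k ≤ n := Nat.sInf_le hk1.le
  obtain ⟨i, rfl⟩ := Nat.exists_eq_add_of_le hle
  have hi : i < g (k + 1) + 1 := by omega
  refine ⟨Nat.pair k i, ?_, ?_⟩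
  · have := Nat.left_le_pair k i
    have := le_max_left B K
    omega
  · change guess a (Nat.pair k i) = _
    simp only [guess, Nat.unpair_pair, cellIndex_eq hk, hc, Denumerable.ofNat_encode]
    simp [hi]

theorem main_theorem (Φ : Set (ℕ → ℝ)) (hΦ : ∀ a ∈ Φ, TendsToInfty a)
    (hC : CondC Φ) (h1 : Cond1 Φ) (h2 : ∀ a ∈ Φ, Cond2 a) :
    nonMeagreCard ≤ Cardinal.mk Φ := by
  exact nonMeagreCard_le_of_guesses (exists_guesses_of_condC Φ hΦ hC h1 h2)
end

section
/- Let a : ℕ → ℝ be a sequence tending to ∞ satisfying 0 < a(n+1) − a(n) ≤ a(n) − a(n−1) for all n ≥ 1. Let j ≥ 1 and k be natural numbers, and suppose the interval (k, k + 1/j) contains more than one term of the sequence, i.e. there exist indices m ≠ m' with a(m), a(m') ∈ (k, k + 1/j). Then ⋃_{n∈ℕ} (a(n) − 1/j, a(n) + 1/j) ⊇ (k, ∞). -/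
/-!
The hypothesis `Cond2 a` makes the sequence strictly increasing with nonincreasing gaps.
If `a m` and `a m'` with `m < m'` both lie in `(k, k + 1/j)`, the gap after `m` is less than `1/j`, hence so is
every later gap. A point `x > k` with `x ≤ a m` is within `1/j` of `a m`. A point `x > a m` lies in
some `(a n, a (n+1)]` with `n ≥ m` because `a` tends to infinity, so it is within `1/j` of `a n`.
-/

open Filter Set

theorem observation (a : ℕ → ℝ) (ha : TendsToInfty a) (h2 : Cond2 a)
    (j k : ℕ) (hj : 1 ≤ j)
    (h : ∃ m m' : ℕ, m ≠ m' ∧ a m ∈ Set.Ioo (k : ℝ) ((k : ℝ) + 1 / j) ∧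
      a m' ∈ Set.Ioo (k : ℝ) ((k : ℝ) + 1 / j)) :
    Set.Ioi (k : ℝ) ⊆ ⋃ n : ℕ, Set.Ioo (a n - 1 / j) (a n + 1 / j) := by
  have hmono : StrictMono a := by
    refine strictMono_nat_of_lt_succ fun n => ?_
    -- The gap at `n` is at least the gap at `n + 1`, which is positive; this covers `n = 0` too.
    have := h2 n
    linarith [this.1, this.2]
  have hgap : Antitone fun n => a (n + 1) - a n :=
    antitone_nat_of_succ_le fun n => (h2 n).2
  have hlt : ∃ m m' : ℕ, m < m' ∧ a m ∈ Set.Ioo (k : ℝ) ((k : ℝ) + 1 / j) ∧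
      a m' ∈ Set.Ioo (k : ℝ) ((k : ℝ) + 1 / j) := by
    obtain ⟨m, m', hne, hm, hm'⟩ := h
    rcases lt_or_gt_of_ne hne with hl | hl
    · exact ⟨m, m', hl, hm, hm'⟩
    · exact ⟨m', m, hl, hm', hm⟩
  obtain ⟨m, m', hmm, hm, hm'⟩ := hlt
  have hstep : a (m + 1) - a m < 1 / j := by
    have : a (m + 1) ≤ a m' := hmono.monotone hmm
    linarith [hm.1, hm'.2]
  have hpos : (0 : ℝ) < 1 / j := by
    have : (0 : ℝ) < j := by exact_mod_cast hj
    positivity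
  intro x hx
  rw [Set.mem_Ioi] at hx
  rw [Set.mem_iUnion]
  rcases le_or_gt x (a m) with hxm | hxm
  · exact ⟨m, by linarith [hm.2], by linarith⟩
  · have hex : ∃ n, x ≤ a n := (ha.eventually_ge_atTop x).exists
    classical
    -- The least index `n + 1` with `x ≤ a (n + 1)` exceeds `m`, since `a m < x`.
    obtain ⟨n, hn⟩ : ∃ n, Nat.find hex = n + 1 := by
      refine Nat.exists_eq_succ_of_ne_zero fun h0 => ?_
      have hspec := Nat.find_spec hex
      rw [h0] at hspec
      linarith [hmono.monotone (Nat.zero_le m)]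
    have hup : x ≤ a (n + 1) := hn ▸ Nat.find_spec hex
    have hlow : a n < x := not_le.mp (Nat.find_min hex (by omega))
    have hmn : m ≤ n := Nat.lt_succ_iff.mp (hmono.lt_iff_lt.mp (hxm.trans_le hup))
    have hle : a (n + 1) - a n ≤ a (m + 1) - a m := hgap hmn
    exact ⟨n, by linarith, by linarith⟩
end

section
/- Let a : ℕ → ℝ be a sequence tending to ∞ satisfying 0 < a(n+1) − a(n) ≤ a(n) − a(n−1) for all n ≥ 1, and let f : ℕ → ℕ be such that for all but finitely many i ∈ ℕ and every j ≥ 1, if (i, ∞) ⊆ ⋃_{n∈ℕ} (a(n) − 1/j, a(n) + 1/j) then j ≤ f(i). Then there exists m ∈ ℕ such that for every k ≥ m the interval (k, k + 1/(f(k)+1)) contains at most one term of the sequence, i.e. the set { n ∈ ℕ : a(n) ∈ (k, k + 1/(f(k)+1)) } has at most one element. -/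
/-!
Condition (2) makes `a` strictly increasing with non-increasing gaps. If `p < q` and both `a p`
and `a q` lie in `(k, k + 1 / (f k + 1))`, then the gap after `a p`, hence every later gap, is
less than `1 / (f k + 1)`. So the intervals of radius `1 / (f k + 1)` around the terms from `a p`
on cover `(k, ∞)`: a point below `a p` is close to `a p`, and a point above it is close to the
last term not exceeding it. For `k` large the hypothesis on `f`, applied with `j = f k + 1`,
then gives `f k + 1 ≤ f k`, a contradiction.
-/

open Filter Set

theorem main_lemma (a : ℕ → ℝ) (ha : TendsToInfty a) (h2 : Cond2 a) (f : ℕ → ℕ)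
    (hf : ∀ᶠ i : ℕ in Filter.atTop, ∀ j : ℕ, 1 ≤ j →
      Set.Ioi (i : ℝ) ⊆ ⋃ n : ℕ, Set.Ioo (a n - 1 / j) (a n + 1 / j) → j ≤ f i) :
    ∃ m : ℕ, ∀ k : ℕ, m ≤ k →
      {n : ℕ | a n ∈ Set.Ioo (k : ℝ) ((k : ℝ) + 1 / (f k + 1))}.Subsingleton := by
  obtain ⟨m, hm⟩ := eventually_atTop.mp hf
  refine ⟨m, fun k hk => ?_⟩
  have hmono : StrictMono a := by
    refine strictMono_nat_of_lt_succ fun n => ?_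
    have := h2 n
    linarith
  have hgap : Antitone fun n => a (n + 1) - a n :=
    antitone_nat_of_succ_le fun n => (h2 n).2
  -- By symmetry, two distinct indices in the set may be taken in increasing order.
  have key : ∀ p q : ℕ, p < q → a p ∈ Ioo (k : ℝ) ((k : ℝ) + 1 / (f k + 1)) →
      a q ∈ Ioo (k : ℝ) ((k : ℝ) + 1 / (f k + 1)) → False := by
    intro p q hpq hp hq
    have hsucc : a (p + 1) ≤ a q := hmono.monotone hpq
    have hcover : Ioi (k : ℝ) ⊆ ⋃ n : ℕ,
        Ioo (a n - 1 / ((f k + 1 : ℕ) : ℝ)) (a n + 1 / ((f k + 1 : ℕ) : ℝ)) := by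
      intro x hx
      push_cast
      have hx : (k : ℝ) < x := hx
      have hpos : (0 : ℝ) < 1 / ((f k : ℝ) + 1) := by positivity
      have hex : ∃ n, x < a (p + n) := by
        obtain ⟨N, hN⟩ := (ha.eventually_gt_atTop x).exists
        exact ⟨N, hN.trans_le (hmono.monotone (by omega))⟩
      -- Locate `x` relative to the terms from `a p` on: the least `n` with `x < a (p + n)`.
      rcases hn : Nat.find hex with _ | n
      · have h := Nat.find_spec hex
        rw [hn, add_zero] at h
        exact mem_iUnion.mpr ⟨p, by linarith [hp.2], by linarith⟩
      · have h := Nat.find_spec hex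
        rw [hn, ← add_assoc] at h
        have h' : a (p + n) ≤ x := not_lt.mp (Nat.find_min hex (m := n) (by omega))
        have hg : a (p + n + 1) - a (p + n) ≤ a (p + 1) - a p := hgap (Nat.le_add_right p n)
        exact mem_iUnion.mpr ⟨p + n, by linarith, by linarith [hp.1, hq.2]⟩
    exact absurd (hm k hk (f k + 1) (by omega) hcover) (by omega)
  intro p hp q hq
  rcases lt_trichotomy p q with h | h | h
  · exact (key p q h hp hq).elim
  · exact h
  · exact (key q p h hq hp).elim
end

section
/- Let Φ be a family of real sequences each tending to ∞, and suppose the family {f_a : a ∈ Φ} is unbounded, i.e. there is NO g : ℕ → ℕ such that for every a ∈ Φ, for all but finitely many i ∈ ℕ and every j ≥ 1, (i, ∞) ⊆ ⋃_{n∈ℕ} (a(n) − 1/j, a(n) + 1/j) implies j ≤ g(i). Then Φ satisfies condition (C): for every open set U ⊆ ℝ unbounded above there exists a ∈ Φ with a(n) ∈ U for infinitely many n. -/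
/-!
For each `i` choose a point `x i > i + 1` of `U` and a `g i` so large that the ball of radius
`1 / (g i + 1)` around `x i` lies in `U`. As `g` does not bound the family, some `a ∈ Φ` has,
for arbitrarily large `i`, a `j > g i` such that the `1 / j`-neighbourhoods of its terms cover
`(i, ∞)`. One of them contains `x i`, so some term of `a` lies in `U` above `i`. Since `i` is
arbitrarily large, infinitely many terms lie in `U`.
-/

open Filter Set

theorem remark1_unbounded_implies_C (Φ : Set (ℕ → ℝ))
    (hΦ : ∀ a ∈ Φ, TendsToInfty a) (hunb : ¬ Cond1 Φ) :
    CondC Φ := by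
  intro U hU hub
  have hx : ∀ i : ℕ, ∃ x : ℝ, ∃ k : ℕ, (i : ℝ) + 1 < x ∧
      Metric.ball x (1 / ((k : ℝ) + 1)) ⊆ U := by
    intro i
    obtain ⟨x, hxU, hix⟩ := not_bddAbove_iff.1 hub ((i : ℝ) + 1)
    obtain ⟨ε, hε, hball⟩ := Metric.isOpen_iff.1 hU x hxU
    obtain ⟨k, hk⟩ := exists_nat_one_div_lt hε
    exact ⟨x, k, hix, (Metric.ball_subset_ball hk.le).trans hball⟩
  choose x g hix hball using hx
  by_contra hcon
  push Not at hcon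
  refine hunb ⟨g, fun a ha => ?_⟩
  have hfin : {n : ℕ | a n ∈ U}.Finite := by
    simpa [Set.not_infinite] using hcon a ha
  obtain ⟨B, hB⟩ := (hfin.image a).bddAbove
  obtain ⟨N, hN⟩ := exists_nat_ge B
  filter_upwards [eventually_ge_atTop N] with i hi j hj hcov
  by_contra! hlt
  have hxi : x i ∈ Set.Ioi (i : ℝ) := by
    have := hix i
    simp only [Set.mem_Ioi]
    linarith
  obtain ⟨n, h1, h2⟩ := Set.mem_iUnion.1 (hcov hxi)
  have hj1 : (1 : ℝ) ≤ j := by exact_mod_cast hj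
  have hj2 : (g i : ℝ) + 1 ≤ j := by exact_mod_cast hlt
  have hle1 : 1 / (j : ℝ) ≤ 1 := by
    rw [div_le_one (by linarith)]
    exact hj1
  have hle2 : 1 / (j : ℝ) ≤ 1 / ((g i : ℝ) + 1) :=
    one_div_le_one_div_of_le (by positivity) hj2
  have hmem : a n ∈ U := by
    apply hball i
    rw [Metric.mem_ball, Real.dist_eq, abs_lt]
    constructor <;> linarith
  have hanB : a n ≤ B := hB ⟨n, hmem, rfl⟩
  have hNi : (N : ℝ) ≤ i := by exact_mod_cast hi
  linarith [hix i]
end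

section
/- The bounding number b equals the smallest cardinality of a family Φ of real sequences converging to ∞ which satisfies condition (C). That is, the infimum of the cardinals card Φ over all families Φ of sequences tending to ∞ satisfying condition (C) equals b. -/
/-!
Both inequalities come from translating one kind of family into the other without increasing
the cardinality.

From `f : ℕ → ℕ` one builds a sequence tending to `∞` whose step at a point `x ≥ i` is at most
`1 / (f i + 1)` (`gridSeq`). If `U` is open and unbounded above, choose for every `i` an interval
`(x i, x i + ε i) ⊆ U` with `x i > i + 1`, and let `g i` be such that `1 / (g i + 1) < ε i`. Whenever
`f i > g i`, the steps of the sequence near `x i` are too short to jump over this interval, so a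
family of functions which is not bounded by `g` yields a sequence meeting `U` infinitely often
(`exists_condC_of_unbounded`).

Conversely, a sequence `a` tending to `∞` has finitely many terms in `(k, k + 1)`, so it misses
`(k, k + 1 / (h k + 1))` for a suitable `h k`. If one `g` eventually dominated all these functions
`h`, the open set `⋃ k, (k, k + 1 / (g k + 1))` would contradict condition (C)
(`exists_unbounded_of_condC`).
-/

open Filter Set

/-- The sequence starting at `0` in which a term `x` is followed by `x + 1 / (M + 1)`, where `M` is
the maximum of `f` on `{0, …, ⌊x⌋}`; hence the steps do not increase. -/
noncomputable def gridSeq (f : ℕ → ℕ) : ℕ → ℝ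
  | 0 => 0
  | n + 1 => gridSeq f n + 1 / ((partialSups f ⌊gridSeq f n⌋₊ : ℕ) + 1 : ℝ)

lemma gridSeq_lt_succ (f : ℕ → ℕ) (n : ℕ) : gridSeq f n < gridSeq f (n + 1) := by
  rw [gridSeq]
  have : (0 : ℝ) < 1 / ((partialSups f ⌊gridSeq f n⌋₊ : ℕ) + 1 : ℝ) := by positivity
  linarith

lemma gridSeq_strictMono (f : ℕ → ℕ) : StrictMono (gridSeq f) :=
  strictMono_nat_of_lt_succ (gridSeq_lt_succ f)

lemma gridSeq_succ_le (f : ℕ → ℕ) (n : ℕ) : gridSeq f (n + 1) ≤ gridSeq f n + 1 := by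
  rw [gridSeq]
  have : 1 / ((partialSups f ⌊gridSeq f n⌋₊ : ℕ) + 1 : ℝ) ≤ 1 := by
    rw [div_le_one (by positivity)]
    have := Nat.cast_nonneg (α := ℝ) (partialSups f ⌊gridSeq f n⌋₊)
    linarith
  linarith

lemma gridSeq_succ_le_of_le (f : ℕ → ℕ) (n i : ℕ) (h : (i : ℝ) ≤ gridSeq f n) :
    gridSeq f (n + 1) ≤ gridSeq f n + 1 / ((f i : ℝ) + 1) := by
  rw [gridSeq]
  have : f i ≤ partialSups f ⌊gridSeq f n⌋₊ := le_partialSups_of_le f (Nat.le_floor h)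
  gcongr

lemma gridSeq_tendsto (f : ℕ → ℕ) : Tendsto (gridSeq f) atTop atTop := by
  refine (gridSeq_strictMono f).monotone.tendsto_atTop_atTop fun B => ?_
  by_contra! hB
  -- Below `B` every step is at least `1 / (M + 1)`, with `M` independent of the step.
  set M : ℕ := partialSups f ⌊B⌋₊ with hM
  have step : ∀ n, gridSeq f n + 1 / ((M : ℝ) + 1) ≤ gridSeq f (n + 1) := by
    intro n
    rw [gridSeq]
    have : partialSups f ⌊gridSeq f n⌋₊ ≤ M :=
      (partialSups f).monotone (Nat.floor_le_floor (hB n).le)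
    gcongr
  have lin : ∀ n : ℕ, n * (1 / ((M : ℝ) + 1)) ≤ gridSeq f n := by
    intro n
    induction n with
    | zero => simp [gridSeq]
    | succ n ih =>
      have := step n
      push_cast
      linarith
  obtain ⟨n, hn⟩ := exists_nat_gt (B * ((M : ℝ) + 1))
  have h1 := lin n
  have h2 := hB n
  have hpos : (0 : ℝ) < (M : ℝ) + 1 := by positivity
  rw [mul_one_div, div_le_iff₀ hpos] at h1
  nlinarith

/-- If the steps of `gridSeq f` beyond `i` are shorter than `ε`, then the sequence cannot jump over
an interval of length `ε` lying beyond `i + 1`. -/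
lemma gridSeq_hits (f : ℕ → ℕ) (i : ℕ) (x ε : ℝ) (hx : (i : ℝ) + 1 < x)
    (hε : 1 / ((f i : ℝ) + 1) < ε) : ∃ n, gridSeq f n ∈ Ioo x (x + ε) := by
  classical
  have hex : ∃ n, x < gridSeq f n := ((gridSeq_tendsto f).eventually_gt_atTop x).exists
  have hspec := Nat.find_spec hex
  have hmin := fun m => Nat.find_min hex (m := m)
  generalize Nat.find hex = n at hspec hmin
  cases n with
  | zero =>
    have : (0 : ℝ) ≤ i := Nat.cast_nonneg i
    simp only [gridSeq] at hspec
    linarith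
  | succ n =>
    have h1 := not_lt.mp (hmin n (Nat.lt_succ_self n))
    have h2 := gridSeq_succ_le f n
    have h3 := gridSeq_succ_le_of_le f n i (by linarith)
    exact ⟨n + 1, hspec, by linarith⟩

lemma exists_condC_of_unbounded (F : Set (ℕ → ℕ))
    (hF : ¬ ∃ g : ℕ → ℕ, ∀ f ∈ F, {i : ℕ | g i < f i}.Finite) :
    (∀ a ∈ gridSeq '' F, TendsToInfty a) ∧ CondC (gridSeq '' F) := by
  refine ⟨?_, ?_⟩
  · rintro _ ⟨f, -, rfl⟩
    exact gridSeq_tendsto f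
  · intro U hU hUb
    have key : ∀ i : ℕ, ∃ x : ℝ, ∃ m : ℕ, (i : ℝ) + 1 < x ∧
        Ioo x (x + 1 / ((m : ℝ) + 1)) ⊆ U := by
      intro i
      obtain ⟨x, hxU, hx⟩ := not_bddAbove_iff.mp hUb ((i : ℝ) + 1)
      obtain ⟨ε, hε, hball⟩ := Metric.isOpen_iff.mp hU x hxU
      obtain ⟨m, hm⟩ := exists_nat_one_div_lt hε
      refine ⟨x, m, hx, fun y hy => hball ?_⟩
      rw [Metric.mem_ball, Real.dist_eq, abs_lt]
      constructor <;> linarith [hy.1, hy.2]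
    choose x g hx hg using key
    push Not at hF
    obtain ⟨f, hf, hinf⟩ := hF g
    refine ⟨gridSeq f, mem_image_of_mem _ hf, fun hfin => ?_⟩
    obtain ⟨B, hB⟩ := (hfin.image (gridSeq f)).bddAbove
    obtain ⟨N, hN⟩ := exists_nat_gt B
    obtain ⟨i, hi, hNi⟩ := Set.Infinite.exists_gt hinf N
    have hlt : (1 : ℝ) / ((f i : ℝ) + 1) < 1 / ((g i : ℝ) + 1) := by
      have : (g i : ℝ) < f i := by exact_mod_cast hi
      apply one_div_lt_one_div_of_lt <;> first | positivity | linarith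
    obtain ⟨n, hn⟩ := gridSeq_hits f i (x i) _ (hx i) hlt
    have h1 : gridSeq f n ≤ B := hB (mem_image_of_mem _ (hg i hn))
    have h2 : (N : ℝ) < i := by exact_mod_cast hNi
    linarith [hn.1, hx i]

lemma exists_gap (a : ℕ → ℝ) (ha : TendsToInfty a) (k : ℕ) :
    ∃ m : ℕ, ∀ n, a n ∉ Ioo (k : ℝ) (k + 1 / ((m : ℝ) + 1)) := by
  have hfin : {n | a n < (k : ℝ) + 1}.Finite := by
    have := ha.eventually_ge_atTop ((k : ℝ) + 1)
    rw [← Nat.cofinite_eq_atTop, eventually_cofinite] at this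
    simpa using this
  have hev : ∀ᶠ m : ℕ in atTop, ∀ n ∈ {n | a n < (k : ℝ) + 1},
      a n ∉ Ioo (k : ℝ) (k + 1 / ((m : ℝ) + 1)) := by
    rw [eventually_all_finite hfin]
    intro n _
    rcases le_or_gt (a n) k with h | h
    · exact Eventually.of_forall fun m hm => absurd hm.1 (not_lt.mpr h)
    · have := (tendsto_one_div_add_atTop_nhds_zero_nat (𝕜 := ℝ)).eventually_lt_const
        (sub_pos.mpr h)
      filter_upwards [this] with m hm hmem
      linarith [hmem.2]
  obtain ⟨m, hm⟩ := hev.exists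
  refine ⟨m, fun n hn => hm n ?_ hn⟩
  have : 1 / ((m : ℝ) + 1) ≤ 1 := by
    rw [div_le_one (by positivity)]
    have := Nat.cast_nonneg (α := ℝ) m
    linarith
  exact lt_of_lt_of_le hn.2 (by linarith)

lemma exists_unbounded_of_condC (Φ : Set (ℕ → ℝ)) (hΦ : ∀ a ∈ Φ, TendsToInfty a)
    (hC : CondC Φ) :
    ∃ F : Set (ℕ → ℕ), (¬ ∃ g : ℕ → ℕ, ∀ f ∈ F, {i : ℕ | g i < f i}.Finite) ∧
      Cardinal.mk F ≤ Cardinal.mk Φ := by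
  choose h hh using fun a : Φ => exists_gap a.1 (hΦ a.1 a.2)
  refine ⟨range h, ?_, Cardinal.mk_range_le⟩
  rintro ⟨g, hg⟩
  have hopen : IsOpen (⋃ k : ℕ, Ioo (k : ℝ) (k + 1 / ((g k : ℝ) + 1))) :=
    isOpen_iUnion fun k => isOpen_Ioo
  obtain ⟨a, haΦ, hinf⟩ := hC _ hopen <| by
    rw [not_bddAbove_iff]
    intro B
    obtain ⟨k, hk⟩ := exists_nat_gt B
    have hpos : (k : ℝ) < k + 1 / ((g k : ℝ) + 1) := by
      have : (0 : ℝ) < 1 / ((g k : ℝ) + 1) := by positivity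
      linarith
    obtain ⟨y, hy⟩ := exists_between hpos
    exact ⟨y, mem_iUnion.mpr ⟨k, hy⟩, hk.trans hy.1⟩
  -- A term of `a` in the `k`-th interval forces `g k < h k`; only finitely many such `k` exist.
  obtain ⟨K, hK⟩ := (hg _ (mem_range_self ⟨a, haΦ⟩)).bddAbove
  have hfar := (hΦ a haΦ).eventually_ge_atTop ((K : ℝ) + 1)
  rw [← Nat.cofinite_eq_atTop, eventually_cofinite] at hfar
  refine hinf (hfar.subset fun n hn => ?_)
  obtain ⟨k, hk⟩ := mem_iUnion.mp hn
  have hlt : g k < h ⟨a, haΦ⟩ k := by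
    by_contra! hle
    refine hh ⟨a, haΦ⟩ k n ⟨hk.1, hk.2.trans_le ?_⟩
    gcongr
  have hkK : (k : ℝ) ≤ K := by exact_mod_cast hK hlt
  have hone : 1 / ((g k : ℝ) + 1) ≤ 1 := by
    rw [div_le_one (by positivity)]
    have := Nat.cast_nonneg (α := ℝ) (g k)
    linarith
  exact not_le.mpr (hk.2.trans_le (by linarith))

lemma univ_unbounded :
    ¬ ∃ g : ℕ → ℕ, ∀ f ∈ (univ : Set (ℕ → ℕ)), {i : ℕ | g i < f i}.Finite := by
  rintro ⟨g, hg⟩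
  have := hg (fun i => g i + 1) (mem_univ _)
  simp [Set.infinite_univ.not_finite] at this

theorem remark1_b_eq :
    boundingNumber = sInf {c : Cardinal | ∃ Φ : Set (ℕ → ℝ),
      (∀ a ∈ Φ, TendsToInfty a) ∧ CondC Φ ∧ c = Cardinal.mk Φ} := by
  apply le_antisymm
  · obtain ⟨h1, h2⟩ := exists_condC_of_unbounded univ univ_unbounded
    refine le_csInf ⟨_, _, h1, h2, rfl⟩ ?_
    rintro _ ⟨Φ, hΦ, hC, rfl⟩
    obtain ⟨F, hF, hle⟩ := exists_unbounded_of_condC Φ hΦ hC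
    exact le_trans (csInf_le' ⟨F, hF, rfl⟩) hle
  · refine le_csInf ⟨_, univ, univ_unbounded, rfl⟩ ?_
    rintro _ ⟨F, hF, rfl⟩
    obtain ⟨h1, h2⟩ := exists_condC_of_unbounded F hF
    exact le_trans (csInf_le' ⟨_, h1, h2, rfl⟩) Cardinal.mk_image_le
end

section
/- There exists a family Φ of real sequences each tending to ∞ such that: card Φ = b; Φ satisfies condition (C); every a ∈ Φ satisfies 0 < a(n+1) − a(n) ≤ a(n) − a(n−1) for all n ≥ 1; and the family {f_a : a ∈ Φ} is unbounded, i.e. there is no g : ℕ → ℕ such that for every a ∈ Φ, for all but finitely many i ∈ ℕ and every j ≥ 1, (i, ∞) ⊆ ⋃_{n∈ℕ} (a(n) − 1/j, a(n) + 1/j) implies j ≤ g(i). -/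
/-!
The covering condition in `Cond1` says `j ≤ f_a(i)`. If the functions `f_a` are unbounded, then
condition (C) is automatic (`condC_of_not_cond1`): an open set `U` unbounded above contains, for
each `i`, a ball of radius `1 / g i` whose centre lies in `(i, ∞)`, and a sequence with
`f_a(i) > g i` has a term in that ball. It therefore suffices to turn an unbounded family `F` of
cardinality `b` into sequences with `f_a ≥ f`, each with nonincreasing gaps
(`exists_slow_sequence`): a sequence standing at `x` advances by the reciprocal of a monotone
function majorizing `f`, evaluated slightly beyond `x`. Any initial term `≤ -1` is allowed; it is used to
code `f`, so that distinct `f` give distinct sequences and the cardinality is exactly `b`.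
-/


open Filter Set

/-- Unboundedness of the functions `f_a` implies condition (C). -/
theorem condC_of_not_cond1 (Φ : Set (ℕ → ℝ)) (h : ¬ Cond1 Φ) : CondC Φ := by
  intro U hU hub
  have key : ∀ i : ℕ, ∃ g : ℕ, 1 ≤ g ∧ ∃ x : ℝ, (i : ℝ) < x ∧
      ∀ y, |y - x| < 1 / (g : ℝ) → y ∈ U := by
    intro i
    obtain ⟨x, hxU, hx⟩ := not_bddAbove_iff.1 hub i
    obtain ⟨ε, hε, hb⟩ := Metric.isOpen_iff.1 hU x hxU
    obtain ⟨n, hn⟩ := exists_nat_one_div_lt hε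
    refine ⟨n + 1, by omega, x, hx, fun y hy => hb ?_⟩
    rw [Metric.mem_ball, Real.dist_eq]
    push_cast at hy
    exact hy.trans hn
  choose g hg1 x hx hy using key
  unfold Cond1 at h
  push Not at h
  obtain ⟨a, ha, hfreq⟩ := h g
  refine ⟨a, ha, fun hfin => ?_⟩
  obtain ⟨M, hM⟩ := (hfin.image a).bddAbove
  obtain ⟨i, hi, j, hj1, hcov, hgj⟩ := (Filter.frequently_atTop.1 hfreq) (⌈M⌉₊ + 1)
  obtain ⟨n, hn⟩ := mem_iUnion.1 (hcov (hx i))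
  have hgpos : (1 : ℝ) ≤ g i := by exact_mod_cast hg1 i
  have hjg : 1 / (j : ℝ) ≤ 1 / (g i : ℝ) :=
    one_div_le_one_div_of_le (by linarith) (by exact_mod_cast hgj.le)
  have hg_le : 1 / (g i : ℝ) ≤ 1 := by
    rw [div_le_one (by linarith)]; exact hgpos
  have hnU : a n ∈ U := by
    refine hy i _ (abs_lt.2 ⟨?_, ?_⟩)
    · linarith [hn.2]
    · linarith [hn.1]
  have h1 : a n ≤ M := hM ⟨n, hnU, rfl⟩
  have h2 : ((⌈M⌉₊ + 1 : ℕ) : ℝ) ≤ i := by exact_mod_cast hi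
  push_cast at h2
  linarith [Nat.le_ceil M, hn.2, hx i]

/-- For every `f` there is a sequence with nonincreasing gaps tending to `∞` such that `f_a ≥ f`;
its initial term may be any prescribed number at most `-1`. -/
theorem exists_slow_sequence (f : ℕ → ℕ) (r : ℝ) (hr : 1 ≤ r) :
    ∃ a : ℕ → ℝ, a 0 = -r ∧ TendsToInfty a ∧ Cond2 a ∧
      ∀ i : ℕ, 1 ≤ f i →
        Set.Ioi (i : ℝ) ⊆ ⋃ n : ℕ, Set.Ioo (a n - 1 / (f i : ℝ)) (a n + 1 / (f i : ℝ)) := by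
  obtain ⟨G, hGmono, hG1, hGf⟩ : ∃ G : ℕ → ℕ, Monotone G ∧ (∀ k, 1 ≤ G k) ∧ ∀ k, f k ≤ G k := by
    refine ⟨fun k => 1 + ∑ j ∈ Finset.range (k + 1), f j, fun k l hkl => ?_, fun k => by simp,
      fun k => ?_⟩
    · have : ∑ j ∈ Finset.range (k + 1), f j ≤ ∑ j ∈ Finset.range (l + 1), f j :=
        Finset.sum_le_sum_of_subset (Finset.range_mono (by omega))
      show 1 + _ ≤ 1 + _
      omega
    · have : f k ≤ ∑ j ∈ Finset.range (k + 1), f j :=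
        Finset.single_le_sum (fun _ _ => Nat.zero_le _) (by simp)
      show _ ≤ 1 + _
      omega
  -- The `+ 1` makes the gap small already on the last step before an integer is passed.
  obtain ⟨d, hd⟩ : ∃ d : ℝ → ℝ, ∀ x, d x = 1 / (G (⌈x⌉₊ + 1) : ℝ) := ⟨_, fun _ => rfl⟩
  have hGpos : ∀ k, (0 : ℝ) < G k := fun k => by exact_mod_cast hG1 k
  have hdpos : ∀ x, 0 < d x := fun x => by rw [hd]; exact one_div_pos.2 (hGpos _)
  have hd1 : ∀ x, d x ≤ 1 := fun x => by
    rw [hd, div_le_one (hGpos _)]; exact_mod_cast hG1 _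
  have hdanti : Antitone d := fun x y hxy => by
    rw [hd, hd]
    refine one_div_le_one_div_of_le (hGpos _) ?_
    exact_mod_cast hGmono (Nat.add_le_add_right (Nat.ceil_mono hxy) 1)
  obtain ⟨b, hb0, hb⟩ : ∃ b : ℕ → ℝ, b 0 = 0 ∧ ∀ n, b (n + 1) = b n + d (b n) :=
    ⟨fun n => (fun x => x + d x)^[n] 0, rfl, fun n => Function.iterate_succ_apply' _ _ _⟩
  have hbmono : Monotone b := monotone_nat_of_le_succ fun n => by
    rw [hb]; linarith [hdpos (b n)]
  have hbtop : Tendsto b atTop atTop := by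
    refine tendsto_atTop_atTop_of_monotone hbmono fun M => ?_
    by_contra! hlt
    have hlow : ∀ n : ℕ, n * d M ≤ b n := by
      intro n
      induction n with
      | zero => simp [hb0]
      | succ n ih =>
        rw [hb]; push_cast
        linarith [hdanti (hlt n).le]
    obtain ⟨n, hn⟩ := exists_nat_gt (M / d M)
    rw [div_lt_iff₀ (hdpos M)] at hn
    linarith [hlow n, hlt n]
  refine ⟨fun n => Nat.casesOn n (-r) b, rfl, ?_, ?_, ?_⟩
  · exact (tendsto_add_atTop_iff_nat 1).1 hbtop
  · intro n
    cases n with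
    | zero =>
      show 0 < b 1 - b 0 ∧ b 1 - b 0 ≤ b 0 - (-r)
      rw [hb 0, hb0]
      constructor <;> linarith [hdpos 0, hd1 0]
    | succ n =>
      show 0 < b (n + 2) - b (n + 1) ∧ b (n + 2) - b (n + 1) ≤ b (n + 1) - b n
      have h1 := hb (n + 1)
      have h2 := hb n
      have h3 := hdanti (hbmono (Nat.le_succ n))
      constructor <;> linarith [hdpos (b (n + 1))]
  · intro i hi x hx
    have hx : (i : ℝ) < x := hx
    have hi0 : (0 : ℝ) ≤ i := Nat.cast_nonneg i
    have hex : ∃ n, x < b n := (hbtop.eventually_gt_atTop x).exists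
    classical
    obtain ⟨n, hn⟩ : ∃ n, Nat.find hex = n + 1 := by
      refine Nat.exists_eq_succ_of_ne_zero fun h0 => ?_
      have := Nat.find_spec hex
      rw [h0, hb0] at this
      linarith
    have hlt : x < b (n + 1) := hn ▸ Nat.find_spec hex
    have hle : b n ≤ x := not_lt.1 (Nat.find_min hex (by omega))
    rw [hb] at hlt
    have hin : i ≤ ⌈b n⌉₊ + 1 := by
      have h1 : (i : ℝ) < (⌈b n⌉₊ : ℝ) + 1 := by linarith [hd1 (b n), Nat.le_ceil (b n)]
      exact_mod_cast h1.le
    have hfpos : (0 : ℝ) < f i := by exact_mod_cast hi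
    have hgap : d (b n) ≤ 1 / (f i : ℝ) := by
      rw [hd]
      refine one_div_le_one_div_of_le hfpos ?_
      exact_mod_cast (hGf i).trans (hGmono hin)
    have hfi : 0 < 1 / (f i : ℝ) := one_div_pos.2 hfpos
    refine mem_iUnion.2 ⟨n + 1, ?_, ?_⟩
    · show b n - 1 / (f i : ℝ) < x
      linarith
    · show x < b n + 1 / (f i : ℝ)
      linarith

/-- The bounding number is attained. -/
theorem exists_unbounded_family : ∃ F : Set (ℕ → ℕ),
    (¬ ∃ g : ℕ → ℕ, ∀ f ∈ F, {i : ℕ | g i < f i}.Finite) ∧ boundingNumber = Cardinal.mk F := by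
  refine csInf_mem (s := {c : Cardinal | ∃ F : Set (ℕ → ℕ),
    (¬ ∃ g : ℕ → ℕ, ∀ f ∈ F, {i : ℕ | g i < f i}.Finite) ∧ c = Cardinal.mk F})
    ⟨_, Set.univ, ?_, rfl⟩
  rintro ⟨g, hg⟩
  have := hg (fun i => g i + 1) (mem_univ _)
  simp only [Nat.lt_succ_self, ofPred_true] at this
  exact infinite_univ this

theorem exists_injective_coding : ∃ e : (ℕ → ℕ) → ℝ, Function.Injective e ∧ ∀ f, 1 ≤ e f := by
  have hcard : Cardinal.mk (ℕ → ℕ) ≤ Cardinal.mk ℝ := by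
    rw [Cardinal.mk_real]; simp
  obtain ⟨e⟩ := hcard
  refine ⟨fun f => 1 + Real.exp (e f), fun f g h => ?_, fun f => ?_⟩
  · exact e.injective (Real.exp_injective (add_left_cancel h))
  · linarith [Real.exp_pos (e f)]

theorem remark2 :
    ∃ Φ : Set (ℕ → ℝ), (∀ a ∈ Φ, TendsToInfty a) ∧
      Cardinal.mk Φ = boundingNumber ∧ CondC Φ ∧ (∀ a ∈ Φ, Cond2 a) ∧ ¬ Cond1 Φ := by
  obtain ⟨F, hF, hFb⟩ := exists_unbounded_family
  obtain ⟨e, he, he1⟩ := exists_injective_coding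
  choose A hA0 hAtop hA2 hAcov using fun f => exists_slow_sequence f (e f) (he1 f)
  have hAinj : Function.Injective A := fun f g h => he <| by
    have := congrFun h 0
    rw [hA0, hA0] at this
    exact neg_injective this
  have hnot : ¬ Cond1 (A '' F) := by
    rintro ⟨g, hg⟩
    refine hF ⟨g, fun f hf => ?_⟩
    obtain ⟨N, hN⟩ := eventually_atTop.1 (hg (A f) ⟨f, hf, rfl⟩)
    refine (finite_lt_nat N).subset fun i (hi : g i < f i) => ?_
    by_contra hNi
    have hf1 : 1 ≤ f i := by omega
    exact absurd (hN i (not_lt.1 hNi) (f i) hf1 (hAcov f i hf1)) (by omega)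
  refine ⟨A '' F, ?_, ?_, condC_of_not_cond1 _ hnot, ?_, hnot⟩
  · rintro _ ⟨f, -, rfl⟩
    exact hAtop f
  · rw [Cardinal.mk_image_eq hAinj, hFb]
  · rintro _ ⟨f, -, rfl⟩
    exact hA2 f
end

section
/- Let X ⊆ ℝ be a set that is not meagre (not of first category). Then the family Φ = { (n ↦ x + log(n+1)) : x ∈ X } of real sequences satisfies: every member tends to ∞; Φ satisfies condition (C); every a ∈ Φ satisfies 0 < a(n+1) − a(n) ≤ a(n) − a(n−1) for all n ≥ 1; and there exists g : ℕ → ℕ such that for every a ∈ Φ, for all but finitely many i ∈ ℕ and every j ≥ 1, (i, ∞) ⊆ ⋃_{n∈ℕ} (a(n) − 1/j, a(n) + 1/j) implies j ≤ g(i). -/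
/-!
Condition (C) is a Baire category argument. For `U` open and unbounded above, the set of `x` such
that `x + log (n + 1) ∈ U` for some `n ≥ k` is open, and it is dense because the gaps of
`log (n + 1)` tend to `0` (`dense_hits`). The intersection over `k` is therefore residual, so the
non-meagre set `X` meets it.

For condition (1), the first term of `x + log (n + 1)` beyond `i` has index
`k = ⌊exp (i - x)⌋`, and the midpoint of the `k`-th and `(k + 1)`-st terms is at distance at least
`1 / (2 * (k + 2))` from all terms. So covering `(i, ∞)` forces `j ≤ 2 * (k + 2)`, which is at most
`2 * (exp (2 * i) + 2)` as soon as `i ≥ -x`: a bound independent of `x`.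
-/

open Filter Set

lemma log_gap_lower (k : ℕ) :
    1 / ((k : ℝ) + 2) ≤ Real.log ((k : ℝ) + 2) - Real.log ((k : ℝ) + 1) := by
  have h1 : (0 : ℝ) < (k : ℝ) + 1 := by positivity
  have h2 : (0 : ℝ) < (k : ℝ) + 2 := by positivity
  rw [← Real.log_div h2.ne' h1.ne']
  have h := Real.one_sub_inv_le_log_of_pos (div_pos h2 h1)
  have e : 1 - (((k : ℝ) + 2) / ((k : ℝ) + 1))⁻¹ = 1 / ((k : ℝ) + 2) := by
    field_simp
    ring
  rwa [e] at h

lemma log_gap_upper {s m : ℝ} (hm : 0 < m) (hs : s < m + 1) (hs0 : 0 < s) :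
    Real.log s - Real.log m < 1 / m := by
  rw [← Real.log_div hs0.ne' hm.ne']
  have h := Real.log_le_sub_one_of_pos (div_pos hs0 hm)
  have h2 : s / m < (m + 1) / m := by gcongr
  have h3 : (m + 1) / m = 1 + 1 / m := by field_simp
  linarith

lemma isOpen_hits {U : Set ℝ} (hU : IsOpen U) (k : ℕ) :
    IsOpen {x : ℝ | ∃ n : ℕ, k ≤ n ∧ x + Real.log (n + 1) ∈ U} := by
  have : {x : ℝ | ∃ n : ℕ, k ≤ n ∧ x + Real.log (n + 1) ∈ U} =
      ⋃ n : ℕ, ⋃ _ : k ≤ n, (fun x : ℝ => x + Real.log (n + 1)) ⁻¹' U := by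
    ext x
    simp
  rw [this]
  exact isOpen_iUnion fun n => isOpen_iUnion fun _ => hU.preimage (by fun_prop)

lemma dense_hits {U : Set ℝ} (hU : ¬ BddAbove U) (k : ℕ) :
    Dense {x : ℝ | ∃ n : ℕ, k ≤ n ∧ x + Real.log (n + 1) ∈ U} := by
  rw [Metric.dense_iff]
  intro y ε hε
  obtain ⟨N, hN⟩ := exists_nat_gt (1 / ε)
  obtain ⟨u, huU, hu⟩ := not_bddAbove_iff.1 hU (y + Real.log ((k : ℝ) + N + 1))
  have hexp : (k : ℝ) + N + 1 < Real.exp (u - y) := by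
    rw [← Real.log_lt_iff_lt_exp (by positivity)]
    linarith
  -- `n + 1 = ⌊exp (u - y)⌋`: the `n`-th term started at `y` is the last one not exceeding `u`
  have hfl : k + N + 1 ≤ ⌊Real.exp (u - y)⌋₊ := Nat.le_floor (by push_cast; exact hexp.le)
  obtain ⟨n, hn⟩ : ∃ n, ⌊Real.exp (u - y)⌋₊ = n + 1 := ⟨⌊Real.exp (u - y)⌋₊ - 1, by omega⟩
  have hle : ((n : ℝ) + 1) ≤ Real.exp (u - y) := by
    have := Nat.floor_le (Real.exp_pos (u - y)).le
    rw [hn] at this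
    exact_mod_cast this
  have hlt : Real.exp (u - y) < (n : ℝ) + 1 + 1 := by
    have := Nat.lt_floor_add_one (Real.exp (u - y))
    rw [hn] at this
    exact_mod_cast this
  have hm : (0 : ℝ) < (n : ℝ) + 1 := by positivity
  have hgap := log_gap_upper hm hlt (Real.exp_pos _)
  have hlow := Real.log_le_log hm hle
  rw [Real.log_exp] at hgap hlow
  have hNn : (N : ℝ) ≤ n := by
    have : N ≤ n := by omega
    exact_mod_cast this
  have hsmall : 1 / ((n : ℝ) + 1) < ε := by
    rw [one_div_lt hm hε]
    linarith
  refine ⟨u - Real.log ((n : ℝ) + 1), ?_, n, by omega, by simpa using huU⟩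
  rw [Metric.mem_ball, Real.dist_eq, abs_lt]
  constructor <;> linarith

lemma condC_log (X : Set ℝ) (hX : ¬ IsMeagre X) :
    CondC {a : ℕ → ℝ | ∃ x ∈ X, a = fun n : ℕ => x + Real.log (n + 1)} := by
  intro U hU hUb
  by_contra! hcon
  apply hX
  have hres : (⋂ k : ℕ, {x : ℝ | ∃ n : ℕ, k ≤ n ∧ x + Real.log (n + 1) ∈ U}) ∈ residual ℝ :=
    countable_iInter_mem.2 fun k => residual_of_dense_open (isOpen_hits hU k) (dense_hits hUb k)
  refine mem_of_superset hres ?_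
  intro x hx hxX
  refine Set.infinite_of_forall_exists_gt (fun k => ?_) (hcon _ ⟨x, hxX, rfl⟩)
  obtain ⟨n, hn, hnU⟩ := Set.mem_iInter.1 hx (k + 1)
  exact ⟨n, hnU, hn⟩

lemma cond2_log (x : ℝ) : Cond2 fun n : ℕ => x + Real.log (n + 1) := by
  intro n
  have h1 : (0 : ℝ) < (n : ℝ) + 1 := by positivity
  have h2 : (0 : ℝ) < (n : ℝ) + 2 := by positivity
  have h3 : (0 : ℝ) < (n : ℝ) + 3 := by positivity
  have hlt : Real.log ((n : ℝ) + 2) < Real.log ((n : ℝ) + 3) :=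
    Real.log_lt_log h2 (by linarith)
  have hle : Real.log (((n : ℝ) + 3) * (n + 1)) ≤ Real.log (((n : ℝ) + 2) * (n + 2)) :=
    Real.log_le_log (by positivity) (by nlinarith)
  rw [Real.log_mul h3.ne' h1.ne', Real.log_mul h2.ne' h2.ne'] at hle
  have e2 : ((n + 1 : ℕ) : ℝ) + 1 = n + 2 := by push_cast; ring
  have e3 : ((n + 2 : ℕ) : ℝ) + 1 = n + 3 := by push_cast; ring
  simp only [e2, e3]
  constructor <;> linarith

lemma cond1_log (X : Set ℝ) :
    Cond1 {a : ℕ → ℝ | ∃ x ∈ X, a = fun n : ℕ => x + Real.log (n + 1)} := by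
  refine ⟨fun i => ⌈2 * (Real.exp (2 * i) + 2)⌉₊, ?_⟩
  rintro _ ⟨x, -, rfl⟩
  obtain ⟨I, hI⟩ := exists_nat_gt (-x)
  filter_upwards [eventually_ge_atTop I] with i hi j hj hcov
  have hi' : (I : ℝ) ≤ i := by exact_mod_cast hi
  have hjpos : (0 : ℝ) < j := by exact_mod_cast hj
  set k := ⌊Real.exp (i - x)⌋₊ with hk
  have hkle : (k : ℝ) ≤ Real.exp (i - x) := Nat.floor_le (Real.exp_pos _).le
  have hklt : Real.exp (i - x) < (k : ℝ) + 1 := Nat.lt_floor_add_one _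
  have hk1 : (i : ℝ) - x < Real.log ((k : ℝ) + 1) := by
    rwa [Real.lt_log_iff_exp_lt (by positivity)]
  have hgap := log_gap_lower k
  have hk2 : 0 < 1 / ((k : ℝ) + 2) := by positivity
  have hmem : x + (Real.log ((k : ℝ) + 1) + Real.log ((k : ℝ) + 2)) / 2 ∈ Set.Ioi (i : ℝ) := by
    rw [Set.mem_Ioi]
    linarith
  obtain ⟨n, hn1, hn2⟩ := Set.mem_iUnion.1 (hcov hmem)
  have key : 1 / (2 * ((k : ℝ) + 2)) < 1 / j := by
    have e : 1 / (2 * ((k : ℝ) + 2)) = 1 / ((k : ℝ) + 2) / 2 := by field_simp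
    rw [e]
    rcases Nat.lt_or_ge k n with h | h
    · have hc : (k : ℝ) + 2 ≤ n + 1 := by
        have : k + 2 ≤ n + 1 := by omega
        exact_mod_cast this
      have := Real.log_le_log (by positivity) hc
      linarith
    · have hc : (n : ℝ) + 1 ≤ k + 1 := by
        have : n + 1 ≤ k + 1 := by omega
        exact_mod_cast this
      have := Real.log_le_log (by positivity) hc
      linarith
  have hj2 : (j : ℝ) < 2 * ((k : ℝ) + 2) :=
    (one_div_lt_one_div (by positivity) hjpos).1 key
  have hexp : Real.exp (i - x) ≤ Real.exp (2 * i) := Real.exp_le_exp.2 (by linarith)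
  have hceil := Nat.le_ceil (2 * (Real.exp (2 * (i : ℝ)) + 2))
  have : (j : ℝ) ≤ ⌈2 * (Real.exp (2 * (i : ℝ)) + 2)⌉₊ := by linarith
  exact_mod_cast this

theorem remark3a (X : Set ℝ) (hX : ¬ IsMeagre X) :
    (∀ a ∈ {a : ℕ → ℝ | ∃ x ∈ X, a = fun n : ℕ => x + Real.log (n + 1)}, TendsToInfty a) ∧
    CondC {a : ℕ → ℝ | ∃ x ∈ X, a = fun n : ℕ => x + Real.log (n + 1)} ∧
    (∀ a ∈ {a : ℕ → ℝ | ∃ x ∈ X, a = fun n : ℕ => x + Real.log (n + 1)}, Cond2 a) ∧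
    Cond1 {a : ℕ → ℝ | ∃ x ∈ X, a = fun n : ℕ => x + Real.log (n + 1)} := by
  refine ⟨?_, condC_log X hX, ?_, cond1_log X⟩
  · rintro _ ⟨x, -, rfl⟩
    exact tendsto_atTop_add_const_left _ x (Real.tendsto_log_atTop.comp
      (tendsto_atTop_add_const_right _ 1 tendsto_natCast_atTop_atTop))
  · rintro _ ⟨x, -, rfl⟩
    exact cond2_log x
end

section
/- Let x : ℕ → ℝ be a sequence tending to ∞, let ψ : ℕ → ℚ⁺ be a bijection onto the positive rational numbers, and let F ⊆ ℕ^ℕ be a set of functions such that there is no g : ℕ → ℕ with: for every f ∈ F and all but finitely many k, g(k) ≠ f(k). Then the family Φ = { (n ↦ x(n) + ψ(f(n))) : f ∈ F } consists of sequences tending to ∞, satisfies condition (C), and satisfies condition (1): there exists g : ℕ → ℕ such that for every a ∈ Φ, for all but finitely many i ∈ ℕ and every j ≥ 1, (i, ∞) ⊆ ⋃_{n∈ℕ} (a(n) − 1/j, a(n) + 1/j) implies j ≤ g(i). -/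
/-!
Condition (C) holds because for each `n` the open set `U` meets `(x n, ∞)`, hence contains
`x n + q` for some positive rational `q = ψ (g n)`; some `f ∈ F` agrees with this `g` infinitely
often. Condition (1) holds because `x n` is a lower bound for `a n`, uniformly in `a`: the only
intervals of radius `1/j` around terms of `a` which meet `(i, i + 1)` come from the finitely many
`n` with `x n < i + 2`. If there are `N` of these, comparing lengths gives `1 ≤ N * (2 / j)`, so
`j ≤ 2 * N`, a bound which does not depend on `a` (`le_of_Ioi_subset_iUnion`).
-/

open Filter Set

/-- An open set that is unbounded above meets every translate `c + ℚ⁺`. -/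
lemma exists_pos_rat_add_mem {U : Set ℝ} (hU : IsOpen U) (hb : ¬ BddAbove U) (c : ℝ) :
    ∃ q : ℚ, 0 < q ∧ c + (q : ℝ) ∈ U := by
  obtain ⟨u, huU, hu⟩ := not_bddAbove_iff.1 hb c
  have hopen : IsOpen ({t : ℝ | c + t ∈ U} ∩ Set.Ioi 0) :=
    (hU.preimage (continuous_const.add continuous_id)).inter isOpen_Ioi
  obtain ⟨q, hq⟩ := Rat.denseRange_cast (𝕜 := ℝ) |>.exists_mem_open hopen
    ⟨u - c, by simpa using huU, by simpa using hu⟩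
  exact ⟨q, Rat.cast_pos.1 (Set.mem_Ioi.1 hq.2), hq.1⟩

/-- The length comparison behind condition (1): the finite set `S` contains every index whose
interval can meet `(i, i + 1)`, and the intervals have length `2 / j`. -/
lemma le_of_Ioi_subset_iUnion {a : ℕ → ℝ} {i j : ℕ} (hj : 1 ≤ j) (S : Finset ℕ)
    (hS : ∀ n, a n < i + 2 → n ∈ S)
    (h : Set.Ioi (i : ℝ) ⊆ ⋃ n : ℕ, Set.Ioo (a n - 1 / j) (a n + 1 / j)) :
    j ≤ 2 * S.card := by
  have hj0 : (0 : ℝ) < j := by exact_mod_cast hj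
  have hj1 : (1 : ℝ) / j ≤ 1 := by
    rw [div_le_one hj0]
    exact_mod_cast hj
  have hsub : Set.Ioo (i : ℝ) (i + 1) ⊆ ⋃ n ∈ S, Set.Ioo (a n - 1 / j) (a n + 1 / j) := by
    intro t ht
    obtain ⟨n, hn⟩ := Set.mem_iUnion.1 (h ht.1)
    exact Set.mem_biUnion (hS n (by linarith [hn.1, ht.2])) hn
  have hvol := (MeasureTheory.measure_mono (μ := MeasureTheory.volume) hsub).trans
    (MeasureTheory.measure_biUnion_finset_le S _)
  have hlen : ∀ n, a n + 1 / (j : ℝ) - (a n - 1 / j) = 2 / j := fun n => by ring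
  simp only [Real.volume_Ioo, hlen, Finset.sum_const, add_sub_cancel_left] at hvol
  rw [← ENNReal.ofReal_nsmul, ENNReal.ofReal_le_ofReal_iff (by positivity), nsmul_eq_mul,
    ← mul_div_assoc, le_div_iff₀ hj0, one_mul] at hvol
  have : (j : ℝ) ≤ ((2 * S.card : ℕ) : ℝ) := by
    push_cast
    linarith
  exact_mod_cast this

theorem remark3b (x : ℕ → ℝ) (hx : TendsToInfty x)
    (ψ : ℕ → {q : ℚ // 0 < q}) (hψ : Function.Bijective ψ)
    (F : Set (ℕ → ℕ))
    (hF : ¬ ∃ g : ℕ → ℕ, ∀ f ∈ F, ∀ᶠ k in Filter.atTop, g k ≠ f k) :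
    (∀ a ∈ {a : ℕ → ℝ | ∃ f ∈ F, a = fun n : ℕ => x n + ((ψ (f n) : ℚ) : ℝ)},
      TendsToInfty a) ∧
    CondC {a : ℕ → ℝ | ∃ f ∈ F, a = fun n : ℕ => x n + ((ψ (f n) : ℚ) : ℝ)} ∧
    Cond1 {a : ℕ → ℝ | ∃ f ∈ F, a = fun n : ℕ => x n + ((ψ (f n) : ℚ) : ℝ)} := by
  have hlt : ∀ (f : ℕ → ℕ) (n : ℕ), x n < x n + ((ψ (f n) : ℚ) : ℝ) := fun f n =>
    lt_add_of_pos_right _ (by exact_mod_cast (ψ (f n)).2)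
  refine ⟨?_, ?_, ?_⟩
  · rintro _ ⟨f, -, rfl⟩
    exact tendsto_atTop_mono (fun n => (hlt f n).le) hx
  · intro U hU hb
    have hex : ∀ n, ∃ m, x n + ((ψ m : ℚ) : ℝ) ∈ U := fun n => by
      obtain ⟨q, hq, hqU⟩ := exists_pos_rat_add_mem hU hb (x n)
      obtain ⟨m, hm⟩ := hψ.2 ⟨q, hq⟩
      exact ⟨m, by simpa [hm] using hqU⟩
    choose g hg using hex
    push Not at hF
    obtain ⟨f, hfF, hf⟩ := hF g
    refine ⟨_, ⟨f, hfF, rfl⟩, ?_⟩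
    refine (Nat.frequently_atTop_iff_infinite.1 hf).mono fun n hn => ?_
    have hn' : g n = f n := by simpa using hn
    simpa [← hn'] using hg n
  · have hfin : ∀ i : ℕ, {n : ℕ | x n < i + 2}.Finite := fun i => by
      have := hx.eventually_ge_atTop ((i : ℝ) + 2)
      rw [← Nat.cofinite_eq_atTop, eventually_cofinite] at this
      simpa using this
    refine ⟨fun i => 2 * (hfin i).toFinset.card, ?_⟩
    rintro _ ⟨f, -, rfl⟩
    refine Eventually.of_forall fun i j hj h => le_of_Ioi_subset_iUnion hj _ (fun n hn => ?_) h
    simpa using (hlt f n).trans hn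
end

section
/- Let Φ be a family of real sequences each tending to ∞. Assume Φ satisfies condition (C) and that every a ∈ Φ satisfies condition (3): there exists r > 0 such that a(n+1) − a(n) > r for all n ∈ ℕ. Then the cardinality of Φ is at least non(M), the minimum of the cardinalities of non-meagre subsets of ℝ. -/
/-!
The proof passes through Bartoszyński's description of `non(M)` by infinitely often equal families.

Since each interval `(k, k + 1)` contains infinitely many disjoint open intervals, a function
`g : ℕ → ℕ` can be coded by an open set unbounded above with one interval in each `(k, k + 1)`.
A sequence with gaps bounded below has boundedly many terms in `(k, k + 1)`, so condition (C) gives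
a family of functions indexed by `Φ × ℕ` such that every `g` agrees infinitely often with one of
them (`exists_frequently_reading_eq`).

Such a family produces a non-meagre set indexed by pairs of its members
(`exists_not_isMeagre_range`). For a meagre `M`, there are a binary sequence `z` and `H : ℕ → ℕ`
such that a real whose digits agree with `z` on `[k, H k)` for infinitely many `k` is outside `M`
(`exists_generic_digits`). One member of the family equals `H` infinitely often; iterating it gives
an interval partition in which infinitely many pairs of consecutive intervals contain some
`[k, H k)`. A second member guesses, infinitely often at a stage `i`, a set of `3 * i + 1` such
pairs together with the digits of `z` there. Each earlier stage blocks at most three candidates, so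
at every stage a fresh block can be filled with guessed digits; the resulting real avoids `M`.

A non-meagre set is uncountable, so `Φ` is uncountable and `(Φ × ℕ) × (Φ × ℕ)` has the cardinality
of `Φ`.
-/

open Filter Set

/-! ### Binary expansions avoiding a meagre set -/

/-- A generic point for a meagre set. The binary expansion `z` comes from a real all of whose
rational translates avoid `M`; changing finitely many digits is a rational translation, so
openness yields, for every `k`, a bound `H k` that works for all `2 ^ k` initial segments. -/
lemma exists_generic_digits {M : Set ℝ} (hM : IsMeagre M) :
    ∃ (z : ℕ → Fin 2) (H : ℕ → ℕ), ∀ x : ℕ → Fin 2,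
      (∃ᶠ k in atTop, ∀ m, k ≤ m → m < H k → x m = z m) → Real.ofDigits x ∉ M := by
  obtain ⟨S, hSo, hSd, hSc, hSM⟩ := mem_residual_iff.1 hM
  obtain ⟨U, hU⟩ := (hSc.insert univ).exists_eq_range (insert_nonempty _ _)
  have hUo : ∀ n, IsOpen (U n) := fun n => by
    have : U n ∈ insert univ S := hU ▸ mem_range_self n
    rcases this with h | h
    · rw [h]; exact isOpen_univ
    · exact hSo _ h
  have hUd : ∀ n, Dense (U n) := fun n => by
    have : U n ∈ insert univ S := hU ▸ mem_range_self n
    rcases this with h | h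
    · rw [h]; exact dense_univ
    · exact hSd _ h
  have hUM : ∀ y, (∀ n, y ∈ U n) → y ∉ M := fun y hy => by
    refine hSM (mem_sInter.2 fun t ht => ?_)
    have : t ∈ range U := hU ▸ mem_insert_of_mem _ ht
    obtain ⟨n, rfl⟩ := this
    exact hy n
  have hdense : Dense (⋂ p : ℕ × ℚ, (Homeomorph.addRight (p.2 : ℝ)) ⁻¹' U p.1) :=
    dense_iInter_of_isOpen (fun p => (hUo p.1).preimage (Homeomorph.continuous _))
      (fun p => (hUd p.1).preimage (Homeomorph.isOpenMap _))
  obtain ⟨w, hw01, hw⟩ := hdense.inter_open_nonempty (Ioo 0 1) isOpen_Ioo ⟨1 / 2, by norm_num⟩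
  have hwU : ∀ n (q : ℚ), w + q ∈ U n := fun n q => by
    simpa using mem_iInter.1 hw (n, q)
  set z := Real.digits w 2 with hz
  have hzw : Real.ofDigits z = w := Real.ofDigits_digits one_lt_two ⟨hw01.1.le, hw01.2⟩
  have key : ∀ k, ∃ N, ∀ (t : Fin k → Fin 2) (l : Fin (k + 1)), ∀ x : ℕ → Fin 2,
      (∀ m (h : m < k), x m = t ⟨m, h⟩) → (∀ m, k ≤ m → m < N → x m = z m) →
      Real.ofDigits x ∈ U l := by
    intro k
    have : ∀ᶠ N in atTop, ∀ (t : Fin k → Fin 2) (l : Fin (k + 1)), ∀ x : ℕ → Fin 2,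
      (∀ m (h : m < k), x m = t ⟨m, h⟩) → (∀ m, k ≤ m → m < N → x m = z m) →
      Real.ofDigits x ∈ U l := by
      refine eventually_all.2 fun t => eventually_all.2 fun l => ?_
      set y : ℕ → Fin 2 := fun m => if h : m < k then t ⟨m, h⟩ else z m with hy
      have hyU : Real.ofDigits y ∈ U l := by
        have h1 := Real.ofDigits_eq_sum_add_ofDigits y k
        have h2 := Real.ofDigits_eq_sum_add_ofDigits z k
        have h3 : (fun i => y (i + k)) = fun i => z (i + k) := by
          funext i; simp [hy]
        rw [h3] at h1
        have hq : ∀ v : ℕ → Fin 2, ∃ q : ℚ,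
            (q : ℝ) = ∑ i ∈ Finset.range k, Real.ofDigitsTerm v i := fun v =>
          ⟨∑ i ∈ Finset.range k, ((v i : ℕ) : ℚ) * ((2 : ℚ) ^ (i + 1))⁻¹, by
            simp [Real.ofDigitsTerm]⟩
        obtain ⟨q1, hq1⟩ := hq y
        obtain ⟨q2, hq2⟩ := hq z
        have : Real.ofDigits y = w + ((q1 - q2 : ℚ) : ℝ) := by
          rw [← hzw]; push_cast; linarith
        rw [this]; exact hwU _ _
      obtain ⟨ε, hε, hball⟩ := Metric.isOpen_iff.1 (hUo l) _ hyU
      have hlim : Tendsto (fun N : ℕ => (((2 : ℕ) : ℝ) ^ N)⁻¹) atTop (nhds 0) :=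
        tendsto_inv_atTop_zero.comp (tendsto_pow_atTop_atTop_of_one_lt (by norm_num))
      filter_upwards [hlim.eventually_lt_const hε] with N hN x hxt hxz
      refine hball ?_
      rw [Metric.mem_ball, Real.dist_eq]
      refine lt_of_le_of_lt (Real.abs_ofDigits_sub_ofDigits_le fun i hi => ?_) hN
      by_cases h : i < k
      · simp [hy, h, hxt i h]
      · simp [hy, h, hxz i (not_lt.1 h) hi]
    exact this.exists
  choose H hH using key
  refine ⟨z, H, fun x hx => hUM _ fun n => ?_⟩
  obtain ⟨k, hk, hxk⟩ := (hx.and_eventually (eventually_ge_atTop n)).exists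
  exact hH k (fun i => x i) ⟨n, by omega⟩ x (fun _ _ => rfl) hk

/-! ### Selecting separated blocks -/

/-- Selection step: a set `C` with more than `3 * #P` elements has a member at distance at least
two from all of `P`. -/
lemma exists_far (P C : Finset ℕ) :
    ∃ n, (∀ p ∈ P, p + 2 ≤ n ∨ n + 2 ≤ p) ∧ (3 * P.card < C.card → n ∈ C) := by
  set B : Finset ℕ := P.biUnion fun p => {p - 1, p, p + 1} with hB
  have hBc : B.card ≤ 3 * P.card := by
    rw [mul_comm]
    exact Finset.card_biUnion_le_card_mul _ _ _ fun p _ => Finset.card_le_three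
  have hfar : ∀ n, n ∉ B → ∀ p ∈ P, p + 2 ≤ n ∨ n + 2 ≤ p := by
    intro n hn p hp
    by_contra hcon
    refine hn (Finset.mem_biUnion.2 ⟨p, hp, ?_⟩)
    simp only [Finset.mem_insert, Finset.mem_singleton]
    omega
  by_cases h : 3 * P.card < C.card
  · obtain ⟨n, hnC, hnB⟩ := Finset.exists_mem_notMem_of_card_lt_card (hBc.trans_lt h)
    exact ⟨n, hfar n hnB, fun _ => hnC⟩
  · obtain ⟨n, hn⟩ := Infinite.exists_notMem_finset B
    exact ⟨n, hfar n hn, fun h' => absurd h' h⟩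

/-- From a sequence of candidate sets, choose pairwise far apart (at distance at least two)
numbers, the `i`-th one inside the `i`-th candidate set if that has `3 * i + 1` elements: at most
`3 * i` candidates are excluded by the previous choices. -/
lemma exists_far_seq (C : ℕ → Finset ℕ) :
    ∃ n : ℕ → ℕ, (∀ i i', i ≠ i' → n i + 2 ≤ n i' ∨ n i' + 2 ≤ n i) ∧
      ∀ i, (C i).card = 3 * i + 1 → n i ∈ C i := by
  choose pick hfar hmem using exists_far
  let P : ℕ → Finset ℕ := fun i => Nat.rec ∅ (fun i Q => insert (pick Q (C i)) Q) i
  have hPs : ∀ i, P (i + 1) = insert (pick (P i) (C i)) (P i) := fun _ => rfl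
  have hPc : ∀ i, (P i).card ≤ i := by
    intro i
    induction i with
    | zero => simp [P]
    | succ i ih => rw [hPs]; exact (Finset.card_insert_le _ _).trans (by omega)
  have hPm : ∀ i i', i < i' → pick (P i) (C i) ∈ P i' := by
    intro i i' h
    induction i', h using Nat.le_induction with
    | base => rw [hPs]; exact Finset.mem_insert_self _ _
    | succ i' _ ih => rw [hPs]; exact Finset.mem_insert_of_mem ih
  refine ⟨fun i => pick (P i) (C i), fun i i' h => ?_, fun i hi => hmem _ _ ?_⟩
  · rcases lt_or_gt_of_ne h with h | h
    · exact hfar _ _ _ (hPm _ _ h)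
    · exact (hfar _ _ _ (hPm _ _ h)).symm
  · have := hPc i
    omega

/-! ### From infinitely often equal families to non-meagre sets -/

/-- An interval partition from `f : ℕ → ℕ`: each endpoint is mapped to the next one by a strictly
inflationary monotone majorant of `f`. -/
def endpoint (f : ℕ → ℕ) : ℕ → ℕ
  | 0 => 0
  | n + 1 => ∑ l ∈ Finset.range (endpoint f n + 1), f l + endpoint f n + 1

lemma endpoint_strictMono (f : ℕ → ℕ) : StrictMono (endpoint f) :=
  strictMono_nat_of_lt_succ fun n => by rw [endpoint]; omega

/-- If `f k = H k` infinitely often, then infinitely many pairs of consecutive intervals of the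
partition given by `f` contain some `[k, H k)`. -/
lemma infinite_catching {f H : ℕ → ℕ} (h : ∃ᶠ k in atTop, f k = H k) :
    {n | ∃ k, endpoint f n ≤ k ∧ H k ≤ endpoint f (n + 2)}.Infinite := by
  refine Nat.frequently_atTop_iff_infinite.1 (frequently_atTop.2 fun a => ?_)
  obtain ⟨k, hak, hk⟩ := frequently_atTop.1 h (endpoint f a)
  have hex : ∃ n, k < endpoint f (n + 1) :=
    ⟨k, (Nat.lt_succ_self k).trans_le (endpoint_strictMono f).le_apply⟩
  classical
  have h1 := Nat.find_spec hex
  have h2 : endpoint f (Nat.find hex) ≤ k := by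
    rcases hn : Nat.find hex with _ | m
    · simp [endpoint]
    · exact not_lt.1 (Nat.find_min hex (m := m) (by omega))
  refine ⟨Nat.find hex, ?_, k, h2, ?_⟩
  · by_contra hlt
    have := (endpoint_strictMono f).monotone (show Nat.find hex + 1 ≤ a by omega)
    omega
  · rw [← hk, endpoint]
    have := Finset.single_le_sum (f := f) (fun i _ => Nat.zero_le _)
      (Finset.mem_range.2 (show k < endpoint f (Nat.find hex + 1) + 1 by omega))
    omega

open Classical in
/-- The digit sequence assembled from a partition `e` and guesses `(C i, S i)`: at stage `i`, an
index `n i` far from the other ones is selected, inside `C i` if that set has `3 * i + 1`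
elements, and the digits on `[e (n i), e (n i + 2))` are those of the indicator function of `S i`.
Digits outside all these blocks are `0`. -/
noncomputable def assemble (e : ℕ → ℕ) (C S : ℕ → Finset ℕ) (m : ℕ) : Fin 2 :=
  if ∃ i, m ∈ S i ∧ e ((exists_far_seq C).choose i) ≤ m ∧
    m < e ((exists_far_seq C).choose i + 2) then 1 else 0

/-- The hard half of Bartoszyński's characterization of `non(M)`: an indexed family that is
infinitely often equal to every function yields a non-meagre set indexed by pairs. One index
provides an interval partition, the other one the guesses. -/
lemma exists_not_isMeagre_range {ι : Type*} (F : ι → ℕ → ℕ)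
    (hF : ∀ g : ℕ → ℕ, ∃ p, ∃ᶠ k in atTop, F p k = g k) :
    ∃ ψ : ι × ι → ℝ, ¬ IsMeagre (range ψ) := by
  obtain ⟨D, hD⟩ : ∃ D : ℕ → Finset ℕ × Finset ℕ, ∀ G, D (Encodable.encode G) = G :=
    ⟨fun m => (Encodable.decode m).getD (∅, ∅), fun G => by simp [Encodable.encodek]⟩
  refine ⟨fun p => Real.ofDigits (assemble (endpoint (F p.1)) (fun i => (D (F p.2 i)).1)
    (fun i => (D (F p.2 i)).2)), fun hM => ?_⟩
  obtain ⟨z, H, hzH⟩ := exists_generic_digits hM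
  obtain ⟨p, hp⟩ := hF H
  set e := endpoint (F p) with he
  have hemono : StrictMono e := endpoint_strictMono _
  have hA := infinite_catching hp
  rw [← he] at hA
  -- The correct guess at stage `i`: `3 * i + 1` good indices, and all ones of `z` in their blocks.
  have hguess : ∀ i : ℕ, ∃ G : Finset ℕ × Finset ℕ, G.1.card = 3 * i + 1 ∧
      (∀ n ∈ G.1, ∃ k, e n ≤ k ∧ H k ≤ e (n + 2)) ∧
      ∀ n ∈ G.1, ∀ m < e (n + 2), (m ∈ G.2 ↔ z m = 1) := by
    intro i
    obtain ⟨C, hCA, hCc⟩ := hA.exists_subset_card_eq (3 * i + 1)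
    refine ⟨(C, (Finset.range (e (C.sup id + 2))).filter fun m => z m = 1), hCc,
      fun n hn => hCA hn, fun n hn m hm => ?_⟩
    have h1 : n ≤ C.sup id := Finset.le_sup (f := id) hn
    have h2 := hemono.monotone (show n + 2 ≤ C.sup id + 2 by omega)
    simp only [Finset.mem_filter, Finset.mem_range, and_iff_right_iff_imp]
    omega
  choose G hGc hGk hGz using hguess
  obtain ⟨q, hq⟩ := hF fun i => Encodable.encode (G i)
  refine hzH _ ?_ (mem_range_self (p, q))
  simp only
  rw [← he]
  set C : ℕ → Finset ℕ := fun i => (D (F q i)).1 with hC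
  set S : ℕ → Finset ℕ := fun i => (D (F q i)).2 with hS
  set n := (exists_far_seq C).choose with hn
  obtain ⟨hnfar, hnC⟩ := (exists_far_seq C).choose_spec
  rw [← hn] at hnfar hnC
  have hninj : Function.Injective n := fun i i' h => by
    by_contra hne
    have := hnfar i i' hne
    omega
  refine frequently_atTop.2 fun a => ?_
  obtain ⟨i, hi, hia⟩ :=
    (hq.and_eventually (hninj.nat_tendsto_atTop.eventually_ge_atTop a)).exists
  have hDi : D (F q i) = G i := by rw [hi, hD]
  have hCi : C i = (G i).1 := congrArg Prod.fst hDi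
  have hSi : S i = (G i).2 := congrArg Prod.snd hDi
  have hni : n i ∈ (G i).1 := hCi ▸ hnC i (by rw [hCi]; exact hGc i)
  obtain ⟨k, hk1, hk2⟩ := hGk i _ hni
  refine ⟨k, hia.trans (hemono.le_apply.trans hk1), fun m hkm hmH => ?_⟩
  have hzm := hGz i _ hni m (hmH.trans_le hk2)
  -- Distinct stages use disjoint blocks, so only stage `i` affects the digit at `m`.
  have hiff : (∃ i, m ∈ S i ∧ e (n i) ≤ m ∧ m < e (n i + 2)) ↔ z m = 1 := by
    rw [← hzm, ← hSi]
    refine ⟨?_, fun h => ⟨i, h, hk1.trans hkm, hmH.trans_le hk2⟩⟩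
    rintro ⟨i', hmS, h1, h2⟩
    by_cases hii : i' = i
    · rwa [hii] at hmS
    · rcases hnfar i' i hii with h | h
      · have := hemono.monotone h
        omega
      · have := hemono.monotone h
        omega
  simp only [assemble, ← hn, hiff]
  split_ifs with h
  · exact h.symm
  · omega

/-! ### The infinitely often equal family of `Φ` -/

/-- The value read off from `a` at `k` with offset `c`: the integer part of `1 / (y - k)`, where `y`
is the term `c` places after the first term of `a` that is at least `k`. -/
noncomputable def reading (a : ℕ → ℝ) (c k : ℕ) : ℕ :=
  ⌊1 / (a (sInf {n | (k : ℝ) ≤ a n} + c) - k)⌋₊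

/-- Code `g` by the open set with one interval `(k + 1 / (g k + 2), k + 1 / (g k + 1))` in each
`(k, k + 1)`; every `y` in it satisfies `⌊1 / (y - k)⌋ = g k + 1`. A sequence with
gaps at least `r` has at most `1 / r + 1` terms in `(k, k + 1)`, so by the
pigeonhole principle one offset `c` works infinitely often. -/
lemma exists_frequently_reading_eq {Φ : Set (ℕ → ℝ)} (hΦ : ∀ a ∈ Φ, TendsToInfty a)
    (hC : CondC Φ) (h3 : ∀ a ∈ Φ, Cond3 a) (g : ℕ → ℕ) :
    ∃ p : Φ × ℕ, ∃ᶠ k in atTop, reading p.1 p.2 k - 1 = g k := by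
  set J : ℕ → Set ℝ := fun k => Ioo (k + 1 / ((g k : ℝ) + 2)) (k + 1 / ((g k : ℝ) + 1)) with hJ
  have hJ1 : ∀ k y, y ∈ J k → (k : ℝ) < y ∧ y < k + 1 ∧ ⌊1 / (y - k)⌋₊ = g k + 1 := by
    intro k y hy
    obtain ⟨h1, h2⟩ := hy
    have hg : (0 : ℝ) ≤ g k := Nat.cast_nonneg _
    have hp1 : (0 : ℝ) < 1 / ((g k : ℝ) + 2) := by positivity
    have hpos : 0 < y - k := by linarith
    have hle : 1 / ((g k : ℝ) + 1) ≤ 1 := by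
      rw [div_le_one (by positivity)]; linarith
    refine ⟨by linarith, by linarith, ?_⟩
    rw [Nat.floor_eq_iff (by positivity)]
    constructor
    · rw [le_div_iff₀ hpos, mul_comm, ← le_div_iff₀ (by positivity)]
      push_cast; linarith
    · rw [div_lt_iff₀ hpos, mul_comm, ← div_lt_iff₀ (by positivity)]
      push_cast
      rw [add_assoc, one_add_one_eq_two]; linarith
  obtain ⟨a, ha, hinf⟩ := hC (⋃ k, J k) (isOpen_iUnion fun k => isOpen_Ioo) (by
    rintro ⟨b, hb⟩
    obtain ⟨k, hk⟩ := exists_nat_gt b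
    have hne : (J k).Nonempty := by
      refine nonempty_Ioo.2 ?_
      have : (0 : ℝ) ≤ g k := Nat.cast_nonneg _
      gcongr; norm_num
    obtain ⟨y, hy⟩ := hne
    have := hb (mem_iUnion.2 ⟨k, hy⟩)
    have := (hJ1 k y hy).1
    linarith)
  obtain ⟨r, hr, hgap⟩ := h3 a ha
  have hgaps : ∀ n c : ℕ, a n + c * r ≤ a (n + c) := by
    intro n c
    induction c with
    | zero => simp
    | succ c ih =>
      have := hgap (n + c)
      push_cast
      rw [← add_assoc]
      linarith
  have hmono : StrictMono a := strictMono_nat_of_lt_succ fun n => by linarith [hgap n]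
  obtain ⟨N, hN⟩ := exists_nat_gt (1 / r)
  have hfreq : ∃ᶠ k in atTop, ∃ c : Fin N, reading a c k - 1 = g k := by
    refine frequently_atTop.2 fun b => ?_
    obtain ⟨n, hnU, hbn⟩ := ((Nat.frequently_atTop_iff_infinite.2 hinf).and_eventually
      ((hΦ a ha).eventually_ge_atTop ((b : ℝ) + 1))).exists
    obtain ⟨k, hk⟩ := mem_iUnion.1 hnU
    obtain ⟨h1, h2, h4⟩ := hJ1 k _ hk
    set n0 := sInf {n | (k : ℝ) ≤ a n} with hn0
    have hn0k : (k : ℝ) ≤ a n0 := Nat.sInf_mem (s := {n | (k : ℝ) ≤ a n}) ⟨n, h1.le⟩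
    have hn0n : n0 ≤ n := Nat.sInf_le h1.le
    obtain ⟨c, rfl⟩ := Nat.exists_eq_add_of_le hn0n
    have hc : c < N := by
      have := hgaps n0 c
      have : (c : ℝ) * r < 1 := by linarith
      rw [← lt_div_iff₀ hr] at this
      exact_mod_cast this.trans hN
    refine ⟨k, ?_, ⟨c, hc⟩, ?_⟩
    · have : (b : ℝ) < k := by linarith
      exact_mod_cast this.le
    · simp only [reading]
      rw [← hn0, h4]; rfl
  obtain ⟨c, hc⟩ : ∃ c : Fin N, ∃ᶠ k in atTop, reading a c k - 1 = g k := by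
    by_contra! hcon
    refine hfreq ?_
    filter_upwards [eventually_all.2 hcon] with k hk ⟨c, hc⟩
    exact hk c hc
  exact ⟨(⟨a, ha⟩, c), hc⟩

theorem remark4 (Φ : Set (ℕ → ℝ)) (hΦ : ∀ a ∈ Φ, TendsToInfty a)
    (hC : CondC Φ) (h3 : ∀ a ∈ Φ, Cond3 a) :
    nonMeagreCard ≤ Cardinal.mk Φ := by
  obtain ⟨ψ, hψ⟩ := exists_not_isMeagre_range
    (fun (p : Φ × ℕ) k => reading p.1 p.2 k - 1) (exists_frequently_reading_eq hΦ hC h3)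
  have hle : nonMeagreCard ≤ Cardinal.mk (range ψ) := csInf_le' ⟨_, hψ, rfl⟩
  -- `Φ` is uncountable: otherwise `range ψ` would be countable, hence meagre.
  have hunc : ¬ Countable Φ := fun _ => hψ <| by
    rw [← biUnion_of_singleton (range ψ)]
    refine isMeagre_biUnion (countable_range ψ) fun x _ => IsNowhereDense.isMeagre ?_
    simp [IsNowhereDense]
  have haleph : Cardinal.aleph0 ≤ Cardinal.mk Φ := by
    rw [← Cardinal.mk_le_aleph0_iff, not_le] at hunc
    exact hunc.le
  refine hle.trans (Cardinal.mk_range_le.trans ?_)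
  simp only [Cardinal.mk_prod, Cardinal.lift_id, Cardinal.mk_nat]
  rw [Cardinal.mul_aleph0_eq haleph, Cardinal.mul_eq_self haleph]
end

section
/- Let Φ be a family of real sequences each tending to ∞ such that every a ∈ Φ satisfies condition (3): there exists r > 0 with a(n+1) − a(n) > r for all n ∈ ℕ. Then Φ satisfies condition (1): there exists g : ℕ → ℕ such that for every a ∈ Φ, for all but finitely many i ∈ ℕ and every j ≥ 1, if (i, ∞) ⊆ ⋃_{n∈ℕ} (a(n) − 1/j, a(n) + 1/j) then j ≤ g(i). -/
/-!
The identity bounds the whole family. If the gaps of `a` exceed `r > 0`, then the midpoint of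
`a n` and `a (n + 1)` is at distance more than `r / 2` from every term of `a`. Since `a` tends to
infinity, such midpoints occur in every `(i, ∞)`, so a covering of `(i, ∞)` with radius `1 / j`
forces `1 / j ≥ r / 2`, that is `j ≤ 2 / r`, and `2 / r < i` for all large `i`.
-/

open Filter Set

theorem cond3_implies_cond1 (Φ : Set (ℕ → ℝ)) (hΦ : ∀ a ∈ Φ, TendsToInfty a)
    (h3 : ∀ a ∈ Φ, Cond3 a) : Cond1 Φ := by
  refine ⟨fun i => i, fun a ha => ?_⟩
  obtain ⟨r, hr, hgap⟩ := h3 a ha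
  have hmono : StrictMono a := strictMono_nat_of_lt_succ fun n => by linarith [hgap n]
  have hlarge : ∀ᶠ i : ℕ in atTop, 2 / r < (i : ℝ) :=
    tendsto_natCast_atTop_atTop.eventually_gt_atTop (2 / r)
  filter_upwards [hlarge] with i hi j _ hcover
  by_contra hji
  have hij : (i : ℝ) < j := by exact_mod_cast not_le.mp hji
  have hjr : 1 / (j : ℝ) < r / 2 := by
    rw [one_div_lt (by linarith [div_pos two_pos hr]) (by linarith), one_div_div]
    linarith
  obtain ⟨n, hn⟩ := ((hΦ a ha).eventually_gt_atTop (i : ℝ)).exists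
  have hmem : (a n + a (n + 1)) / 2 ∈ Ioi (i : ℝ) := by
    simp only [mem_Ioi]
    linarith [hgap n]
  obtain ⟨k, hk1, hk2⟩ := mem_iUnion.mp (hcover hmem)
  -- The nearest terms to the midpoint are `a n` and `a (n + 1)`, both further than `r / 2`.
  rcases Nat.lt_or_ge n k with h | h
  · linarith [hgap n, hmono.monotone (Nat.succ_le_of_lt h)]
  · linarith [hgap n, hmono.monotone h]
end

section
/- Let X ⊆ (0, ∞) be a set that is not meagre (not of first category). Then the family Φ = { (n ↦ (n+1)·x) : x ∈ X } consists of sequences tending to ∞, satisfies condition (C), and every member satisfies condition (3): there exists r > 0 such that a(n+1) − a(n) > r for all n ∈ ℕ. -/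
/-!
Only condition (C) needs an argument, and it is a Baire category argument. Let `U` be open and
unbounded above. For each `N`, the set of `x` with `(n + 1) * x ∈ U` for some `n ≥ N` is open, and
it is dense in `(0, ∞)`, since for large `u ∈ U` the points `u / (n + 1)` with `n ≥ N` meet every
prescribed interval `(a, b)` with `0 ≤ a < b` (`exists_mul_mem_of_lt`). Adding the negative
half-line makes it dense in `ℝ`. Intersecting over `N`, the set of `x` that are negative or have
infinitely many multiples in `U` is residual, so the non-meagre set `X` meets it.
-/

open Filter Set

theorem exists_mul_mem_of_lt {U : Set ℝ} (hU : ¬ BddAbove U) (N : ℕ) {a b : ℝ} (ha : 0 ≤ a)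
    (hab : a < b) : ∃ c, a < c ∧ c < b ∧ ∃ n : ℕ, N ≤ n ∧ ((n : ℝ) + 1) * c ∈ U := by
  obtain ⟨m, ham, hmb⟩ := exists_between hab
  have hm : 0 < m := ha.trans_lt ham
  have hbm : 0 < b - m := sub_pos.2 hmb
  obtain ⟨M, hM⟩ := exists_nat_gt (m / (b - m))
  rw [div_lt_iff₀ hbm] at hM
  obtain ⟨u, huU, hu⟩ := not_bddAbove_iff.1 hU (((M + N + 1 : ℕ) : ℝ) * m)
  -- With `n + 1 = ⌊u / m⌋`, one has `m ≤ u / (n + 1) < m + m / (n + 1) < b`.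
  have hk : M + N + 1 ≤ ⌊u / m⌋₊ := Nat.le_floor ((le_div_iff₀ hm).2 hu.le)
  have hu0 : 0 ≤ u / m := div_nonneg (le_trans (by positivity) hu.le) hm.le
  have h1 := Nat.floor_le hu0
  have h2 := Nat.lt_floor_add_one (u / m)
  obtain ⟨n, hn⟩ : ∃ n, ⌊u / m⌋₊ = n + 1 := ⟨⌊u / m⌋₊ - 1, by omega⟩
  rw [hn] at h1 h2 hk
  rw [le_div_iff₀ hm] at h1
  rw [div_lt_iff₀ hm] at h2
  push_cast at h1 h2
  have hn0 : (0 : ℝ) < (n : ℝ) + 1 := by positivity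
  have hMn : (M : ℝ) ≤ n := by exact_mod_cast (by omega : M ≤ n)
  refine ⟨u / (n + 1), ?_, ?_, n, by omega, ?_⟩
  · rw [lt_div_iff₀ hn0]
    nlinarith
  · rw [div_lt_iff₀ hn0]
    nlinarith [mul_le_mul_of_nonneg_right hMn hbm.le]
  · rwa [mul_div_cancel₀ _ hn0.ne']

/-- The negative half-line is included so that the set is dense in all of `ℝ`, not just in
`(0, ∞)`. -/
theorem residual_neg_or_exists_mul_mem {U : Set ℝ} (hUo : IsOpen U) (hU : ¬ BddAbove U) (N : ℕ) :
    {x : ℝ | x < 0 ∨ ∃ n : ℕ, N ≤ n ∧ ((n : ℝ) + 1) * x ∈ U} ∈ residual ℝ := by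
  apply residual_of_dense_open
  · have h : {x : ℝ | x < 0 ∨ ∃ n : ℕ, N ≤ n ∧ ((n : ℝ) + 1) * x ∈ U} =
        Iio 0 ∪ ⋃ n : ℕ, ⋃ _ : N ≤ n, (fun x : ℝ => ((n : ℝ) + 1) * x) ⁻¹' U := by
      ext x
      simp
    rw [h]
    exact isOpen_Iio.union (isOpen_iUnion fun n => isOpen_iUnion fun _ =>
      hUo.preimage (by fun_prop))
  · refine dense_of_exists_between fun a b hab => ?_
    rcases lt_or_ge a 0 with ha | ha
    · obtain ⟨c, hac, hc⟩ := exists_between (lt_min hab ha)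
      exact ⟨c, Or.inl (hc.trans_le (min_le_right _ _)), hac, hc.trans_le (min_le_left _ _)⟩
    · obtain ⟨c, hac, hcb, h⟩ := exists_mul_mem_of_lt hU N ha hab
      exact ⟨c, Or.inr h, hac, hcb⟩

theorem remark5 (X : Set ℝ) (hX0 : X ⊆ Set.Ioi (0 : ℝ)) (hX : ¬ IsMeagre X) :
    (∀ a ∈ {a : ℕ → ℝ | ∃ x ∈ X, a = fun n : ℕ => ((n : ℝ) + 1) * x}, TendsToInfty a) ∧
    CondC {a : ℕ → ℝ | ∃ x ∈ X, a = fun n : ℕ => ((n : ℝ) + 1) * x} ∧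
    (∀ a ∈ {a : ℕ → ℝ | ∃ x ∈ X, a = fun n : ℕ => ((n : ℝ) + 1) * x}, Cond3 a) := by
  refine ⟨?_, ?_, ?_⟩
  · rintro _ ⟨x, hx, rfl⟩
    exact (tendsto_atTop_add_const_right _ _ tendsto_natCast_atTop_atTop).atTop_mul_const (hX0 hx)
  · intro U hUo hU
    by_contra! hcon
    apply hX
    have hres := countable_iInter_mem.2 (residual_neg_or_exists_mul_mem hUo hU)
    refine mem_of_superset hres fun x hx hxX => ?_
    refine (hcon _ ⟨x, hxX, rfl⟩).not_infinite (infinite_of_forall_exists_gt fun N => ?_)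
    rcases mem_iInter.1 hx (N + 1) with h | ⟨n, hn, h⟩
    · exact absurd (hX0 hxX) h.not_gt
    · exact ⟨n, h, hn⟩
  · rintro _ ⟨x, hx, rfl⟩
    have hx0 : 0 < x := hX0 hx
    -- Every gap equals `x`, so any `r` in `(0, x)` works for the strict inequality.
    refine ⟨x / 2, half_pos hx0, fun n => ?_⟩
    push_cast
    linarith
end

section
/- Let Φ be a family of real sequences each tending to ∞ such that the family {f_a : a ∈ Φ} is unbounded, i.e. there is no g : ℕ → ℕ such that for every a ∈ Φ, for all but finitely many i ∈ ℕ and every j ≥ 1, (i, ∞) ⊆ ⋃_{n∈ℕ} (a(n) − 1/j, a(n) + 1/j) implies j ≤ g(i). Then for every natural number m ≥ 1, Φ satisfies condition (C_m). -/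
/-!
Given interlaced sequences `x`, `y`, pick for each `i` an index `k i ≥ i` with `x (k i) ≥ i`, and
let `g i` be at least `2 m / (y (k i) - x (k i))`. Since `g` is not an eventual bound, some `a ∈ Φ` has,
for infinitely many `i`, the ray `(i, ∞)` covered by the balls of some radius `1 / j` with `j > g i`
around its terms. Cut `(x (k i), y (k i))` into `m` equal pieces: the radius is less than half the
length of a piece, so the term whose ball covers the midpoint of a piece lies in that piece
(`exists_finset_card_of_cover`). This gives `m` distinct indices, and `k i ≥ i` makes the set of
good `k` infinite.
-/

open Filter Set

/-- If the balls of radius `r < (v - u) / (2 m)` around the terms of `a` cover `(u, v)`, then at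
least `m` terms of `a` lie in `(u, v)`: one in each of `m` disjoint subintervals. -/
theorem exists_finset_card_of_cover (a : ℕ → ℝ) (m : ℕ) (hm : 1 ≤ m) (u v r : ℝ) (huv : u < v)
    (hr : r < (v - u) / (2 * m))
    (hcov : Set.Ioo u v ⊆ ⋃ n : ℕ, Set.Ioo (a n - r) (a n + r)) :
    ∃ s : Finset ℕ, m ≤ s.card ∧ ∀ n ∈ s, a n ∈ Set.Ioo u v := by
  have hm0 : (0 : ℝ) < m := by exact_mod_cast hm
  obtain ⟨d, hd⟩ : ∃ d, d = (v - u) / (2 * m) := ⟨_, rfl⟩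
  have hd0 : 0 < d := by
    rw [hd]
    exact div_pos (sub_pos.mpr huv) (by positivity)
  have hv : v = u + 2 * m * d := by
    rw [hd]
    field_simp
    ring
  rw [← hd] at hr
  have hlast : ∀ t : Fin m, (2 * (t : ℝ) + 2) * d ≤ 2 * m * d := fun t => by
    have h1 : ((t : ℕ) : ℝ) + 1 ≤ m := by exact_mod_cast t.2
    exact mul_le_mul_of_nonneg_right (by linarith) hd0.le
  have hpiece : ∀ t : Fin m, ∃ n : ℕ,
      u + 2 * (t : ℝ) * d < a n ∧ a n < u + (2 * (t : ℝ) + 2) * d := fun t => by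
    have ht0 : 0 ≤ (t : ℝ) * d := by positivity
    have ht := hlast t
    have hmid : u + (2 * (t : ℝ) + 1) * d ∈ Set.Ioo u v := by
      constructor <;> nlinarith
    obtain ⟨n, hn⟩ := Set.mem_iUnion.mp (hcov hmid)
    exact ⟨n, by nlinarith [hn.2], by nlinarith [hn.1]⟩
  choose f hf using hpiece
  have hlt : ∀ t t' : Fin m, t < t' → f t ≠ f t' := fun t t' h he => by
    have h1 : ((t : ℕ) : ℝ) + 1 ≤ (t' : ℕ) := by exact_mod_cast h
    have h2 := (hf t).2
    have h3 := (hf t').1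
    rw [← he] at h3
    nlinarith [mul_le_mul_of_nonneg_right h1 hd0.le]
  have hinj : Function.Injective f := fun t t' he => by
    rcases lt_trichotomy t t' with h | h | h
    · exact absurd he (hlt _ _ h)
    · exact h
    · exact absurd he.symm (hlt _ _ h)
  refine ⟨Finset.univ.image f, ?_, ?_⟩
  · rw [Finset.card_image_of_injective _ hinj]
    simp
  · intro n hn
    obtain ⟨t, -, rfl⟩ := Finset.mem_image.mp hn
    have ht0 : 0 ≤ (t : ℝ) * d := by positivity
    exact ⟨by linarith [(hf t).1], by linarith [(hf t).2, hlast t]⟩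

theorem unbounded_implies_condCm (Φ : Set (ℕ → ℝ)) (hΦ : ∀ a ∈ Φ, TendsToInfty a)
    (hunb : ¬ Cond1 Φ) : ∀ m : ℕ, 1 ≤ m → CondCm m Φ := by
  intro m hm x y hxy _ hx
  have hk : ∀ i : ℕ, ∃ k : ℕ, i ≤ k ∧ (i : ℝ) ≤ x k := fun i =>
    ((eventually_ge_atTop i).and (hx.eventually_ge_atTop (i : ℝ))).exists
  choose k hik hxk using hk
  by_contra hno
  apply hunb
  refine ⟨fun i => ⌈2 * m / (y (k i) - x (k i))⌉₊, fun a ha => ?_⟩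
  have hfin : {k : ℕ | ∃ s : Finset ℕ, m ≤ s.card ∧
      ∀ n ∈ s, a n ∈ Set.Ioo (x k) (y k)}.Finite := by
    by_contra h
    exact hno ⟨a, ha, h⟩
  obtain ⟨B, hB⟩ := hfin.bddAbove
  filter_upwards [eventually_gt_atTop B] with i hi j hj hcov
  by_contra! hgj
  have hlen : 0 < y (k i) - x (k i) := sub_pos.mpr (hxy _)
  have hm0 : (0 : ℝ) < m := by exact_mod_cast hm
  have hj0 : (0 : ℝ) < j := by exact_mod_cast hj
  have hr : (1 : ℝ) / j < (y (k i) - x (k i)) / (2 * m) := by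
    have h1 := Nat.lt_of_ceil_lt hgj
    rw [div_lt_iff₀ hlen] at h1
    rw [div_lt_div_iff₀ hj0 (by positivity)]
    linarith
  have hmem := hB (exists_finset_card_of_cover a m hm _ _ _ (hxy (k i)) hr
    (fun z hz => hcov (lt_of_le_of_lt (hxk i) hz.1)))
  exact absurd (hik i) (by omega)
end

section
/- Let Φ be a family of real sequences each tending to ∞. Assume Φ satisfies condition (C) and Φ does NOT satisfy condition (C_2). Then the cardinality of Φ is at least non(M), the minimum of the cardinalities of non-meagre subsets of ℝ. -/
/-!
The proof passes through infinitely-often-equal families (`IsIOE`) of functions on `ℕ`.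

Since (C₂) fails, there are intervals `(x k, y k)` such that each `a ∈ Φ` has at most one term in
`(x k, y k)` for all but finitely many `k`. Cut each `(x k, y k)` into pairwise disjoint open pieces
`V k 0, V k 1, …`, and let `f a k` be the number of a piece of `(x k, y k)` that contains a term of
`a`. For `g : ℕ → ℕ`, condition (C) applied to `⋃ k, V k (g k)` yields `a ∈ Φ` with
`f a k = g k` for infinitely many `k` (`exists_isIOE`).

It remains to prove one half of Bartoszyński's theorem: a family `f` that is infinitely often equal
and indexed by `ι` yields a non-meagre set of reals indexed by `ι × ι`
(`exists_nonmeagre_of_isIOE`). The two ingredients are the following.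

* The family may be improved so that agreement is found inside any prescribed infinite set of
  arguments (`IsIOE.exists_on_infinite`): guess, at stage `n`, the restriction of `g` to `n + 1`
  points of the set, and use a point that was not used at an earlier stage.
* For a dense open `D ⊆ ℝ` and any `m` there is a finite word such that every real having this word
  in its binary expansion from position `m` on lies in `D` (`exists_word`).

Given dense open sets `D n`, let `φ m` be a word that works at position `m` for `D 0, …, D m`. One
member of the family provides a sequence of cut points `m 0 < m 1 < …` such that `φ (m k)` fits
between `m k` and `m (k + 1)` for infinitely many `k` (`IsIOE.exists_cutPoints`); a second one guesses
`φ (m k)` correctly for infinitely many of these `k`. Writing the guessed words between the cut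
points gives the binary expansion of a real in every `D n`.

Finally, a non-meagre set is infinite, so `Φ` is infinite and `Φ × Φ` has the cardinality of `Φ`.
-/

open Filter Set

/-! ### Infinitely often equal families -/

/-- The family `f` of functions `ℕ → β` is infinitely often equal: every `g : ℕ → β` agrees
with some member of the family at infinitely many arguments. -/
def IsIOE {ι β : Type*} (f : ι → ℕ → β) : Prop :=
  ∀ g : ℕ → β, ∃ i, {k | f i k = g k}.Infinite

/-- The values of an infinitely often equal family may be taken in any nonempty countable type. -/
lemma IsIOE.exists_countable {ι : Type*} {f : ι → ℕ → ℕ} (hf : IsIOE f)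
    (β : Type*) [Countable β] [Nonempty β] : ∃ f' : ι → ℕ → β, IsIOE f' := by
  obtain ⟨e, he⟩ := exists_surjective_nat β
  refine ⟨fun i k => e (f i k), fun g => ?_⟩
  choose r hr using fun k => he (g k)
  obtain ⟨i, hi⟩ := hf r
  refine ⟨i, hi.mono fun k hk => ?_⟩
  have hk' : f i k = r k := hk
  simp [hk', hr]

/-- Greedy selection from finite relations `L n`: there is a single function `G` such that, whenever
`L n` has more than `n` distinct first coordinates, some pair `(p n, G (p n))` belongs to `L n`, with
`p n` different from all `p n'` for `n' < n`. -/
lemma exists_uniformization (L : ℕ → Finset (ℕ × ℕ)) :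
    ∃ (G : ℕ → ℕ) (p : ℕ → ℕ), ∀ n, n < ((L n).image Prod.fst).card →
      (∀ n' < n, p n' ≠ p n) ∧ (p n, G (p n)) ∈ L n := by
  classical
  -- `pick S n` is a pair of `L n` with first coordinate outside `S`, if there is one.
  have hpick : ∀ (S : Finset ℕ) (n : ℕ), ∃ q : ℕ × ℕ,
      S.card < ((L n).image Prod.fst).card → q ∈ L n ∧ q.1 ∉ S := by
    intro S n
    by_cases h : S.card < ((L n).image Prod.fst).card
    · obtain ⟨c, hc, hcS⟩ := Finset.exists_mem_notMem_of_card_lt_card h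
      obtain ⟨q, hq, rfl⟩ := Finset.mem_image.1 hc
      exact ⟨q, fun _ => ⟨hq, hcS⟩⟩
    · exact ⟨(0, 0), fun h' => absurd h' h⟩
  choose pick hpick using hpick
  -- `S n` collects the first coordinates picked before stage `n`.
  let S : ℕ → Finset ℕ := fun n =>
    Nat.rec ∅ (fun n T => insert (pick T n).1 T) n
  have hS : ∀ n, S (n + 1) = insert (pick (S n) n).1 (S n) := fun n => rfl
  have hScard : ∀ n, (S n).card ≤ n := by
    intro n
    induction n with
    | zero => simp [S]
    | succ n ih =>
      rw [hS]
      exact (Finset.card_insert_le _ _).trans (by omega)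
  have hSmono : Monotone S := monotone_nat_of_le_succ fun n => by
    rw [hS]; exact Finset.subset_insert _ _
  let q : ℕ → ℕ × ℕ := fun n => pick (S n) n
  have hqS : ∀ n' n, n' < n → (q n').1 ∈ S n := fun n' n h =>
    hSmono (Nat.succ_le_of_lt h) (by rw [Nat.succ_eq_add_one, hS]; exact Finset.mem_insert_self _ _)
  -- `G` uses the first stage at which its argument was picked.
  refine ⟨fun k => if h : ∃ n, (q n).1 = k then (q (Nat.find h)).2 else 0, fun n => (q n).1,
    fun n hn => ?_⟩
  obtain ⟨hqL, hqn⟩ := hpick (S n) n ((hScard n).trans_lt hn)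
  have hne : ∀ n' < n, (q n').1 ≠ (q n).1 := fun n' hn' he => hqn (he ▸ hqS n' n hn')
  refine ⟨hne, ?_⟩
  have hex : ∃ n', (q n').1 = (q n).1 := ⟨n, rfl⟩
  have hfind : Nat.find hex = n := (Nat.find_eq_iff hex).2 ⟨rfl, hne⟩
  simp only [dif_pos hex, hfind]
  exact hqL

/-- An infinitely often equal family can be improved so that agreement occurs infinitely often
inside any prescribed infinite set of arguments. -/
lemma IsIOE.exists_on_infinite {ι : Type*} {f : ι → ℕ → ℕ} (hf : IsIOE f) :
    ∃ f' : ι → ℕ → ℕ, ∀ (g : ℕ → ℕ) (X : Set ℕ), X.Infinite →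
      ∃ i, {k | k ∈ X ∧ f' i k = g k}.Infinite := by
  classical
  obtain ⟨F, hF⟩ := hf.exists_countable (Finset (ℕ × ℕ))
  choose G p hGp using fun i => exists_uniformization (F i)
  refine ⟨G, fun g X hX => ?_⟩
  let c : ℕ → Finset (ℕ × ℕ) := fun n =>
    (Finset.range (n + 1)).image fun j => (Nat.nth (· ∈ X) j, g (Nat.nth (· ∈ X) j))
  obtain ⟨i, hi⟩ := hF c
  have hcard : ∀ n, n < ((c n).image Prod.fst).card := by
    intro n
    rw [Finset.image_image, Finset.card_image_of_injective]
    · simp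
    · exact Nat.nth_injective (p := (· ∈ X)) hX
  have hgood : ∀ n, F i n = c n →
      (∀ n' < n, p i n' ≠ p i n) ∧ (p i n, G i (p i n)) ∈ c n := by
    intro n hn
    have h := hGp i n (hn ▸ hcard n)
    rwa [hn] at h
  have hinj : Set.InjOn (p i) {n | F i n = c n} := by
    intro n hn n' hn' he
    rcases lt_trichotomy n n' with h | h | h
    · exact absurd he ((hgood n' hn').1 n h)
    · exact h
    · exact absurd he.symm ((hgood n hn).1 n' h)
  refine ⟨i, (hi.image hinj).mono ?_⟩
  rintro _ ⟨n, hn, rfl⟩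
  obtain ⟨j, -, hj⟩ := Finset.mem_image.1 (hgood n hn).2
  rw [Prod.mk.injEq] at hj
  refine ⟨hj.1 ▸ Nat.nth_mem_of_infinite hX j, ?_⟩
  rw [← hj.2, hj.1]

/-- An infinitely often equal family yields sequences of cut points `m i 0 < m i 1 < …` such that, for
each `ψ`, one of these sequences jumps infinitely often past the value of `ψ` at its current term. -/
lemma IsIOE.exists_cutPoints {ι : Type*} {f : ι → ℕ → ℕ} (hf : IsIOE f) :
    ∃ m : ι → ℕ → ℕ, (∀ i, StrictMono (m i)) ∧
      ∀ ψ : ℕ → ℕ, ∃ i, {k | ψ (m i k) ≤ m i (k + 1)}.Infinite := by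
  let b : ι → ℕ → ℕ := fun i n => n + 1 + ∑ j ∈ Finset.range (n + 1), f i j
  have hb : ∀ i n j, j ≤ n → f i j ≤ b i n := fun i n j hj =>
    (Finset.single_le_sum (f := f i) (fun _ _ => Nat.zero_le _)
      (Finset.mem_range.2 (Nat.lt_succ_of_le hj))).trans (Nat.le_add_left _ _)
  let m : ι → ℕ → ℕ := fun i k => Nat.rec 0 (fun _ t => b i t) k
  have hm : ∀ i k, m i (k + 1) = b i (m i k) := fun i k => rfl
  have hmono : ∀ i, StrictMono (m i) := fun i => strictMono_nat_of_lt_succ fun k => by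
    rw [hm]; simp only [b]; omega
  refine ⟨m, hmono, fun ψ => ?_⟩
  let Ψ : ℕ → ℕ := fun n => ∑ j ∈ Finset.range (n + 1), ψ j
  have hΨ : Monotone Ψ := monotone_nat_of_le_succ fun n => by
    simp only [Ψ]; rw [Finset.sum_range_succ _ (n + 1)]; omega
  have hψΨ : ∀ n, ψ n ≤ Ψ n := fun n =>
    Finset.single_le_sum (f := ψ) (fun _ _ => Nat.zero_le _) (by simp)
  obtain ⟨i, hi⟩ := hf fun n => Ψ (Ψ n)
  refine ⟨i, Set.infinite_of_forall_exists_gt fun N => ?_⟩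
  obtain ⟨n, hn, hNn⟩ := hi.exists_gt (m i (N + 1))
  have hn : f i n = Ψ (Ψ n) := hn
  -- `n` lies in the interval `[m k, m (k + 1))`.
  obtain ⟨k, hk, hk'⟩ : ∃ k, m i k ≤ n ∧ n < m i (k + 1) := by
    have hex : ∃ k, n < m i (k + 1) := ⟨n, (hmono i).le_apply (x := n + 1)⟩
    refine ⟨Nat.find hex, ?_, Nat.find_spec hex⟩
    rcases hkk : Nat.find hex with _ | k
    · exact Nat.zero_le _
    · exact not_lt.1 (Nat.find_min hex (by omega : k < Nat.find hex))
  have hNk : N < k := by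
    have : N + 1 < k + 1 := (hmono i).lt_iff_lt.1 (hNn.trans hk')
    omega
  -- Either the interval from `m k` or the next one is long enough.
  rcases le_or_gt (Ψ n) (m i (k + 1)) with h | h
  · exact ⟨k, (hψΨ _).trans ((hΨ hk).trans h), hNk⟩
  · refine ⟨k + 1, ?_, by omega⟩
    calc ψ (m i (k + 1)) ≤ Ψ (m i (k + 1)) := hψΨ _
      _ ≤ Ψ (Ψ n) := hΨ h.le
      _ = f i n := hn.symm
      _ ≤ m i (k + 2) := hb i _ n hk'.le

/-! ### From infinitely often equal families to non-meagre sets -/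

/-- For a dense open `D`, some finite binary word, written from position `m` on, forces a real
into `D`, whatever its other digits are. -/
lemma exists_word {D : Set ℝ} (hDo : IsOpen D) (hDd : Dense D) (m : ℕ) :
    ∃ w : List (Fin 2), ∀ z : ℕ → Fin 2, (∀ i < w.length, z (m + i) = w.getD i 0) →
      Real.ofDigits z ∈ D := by
  -- `A t y` is the real with leading digits `t`, followed by the digits of `y`.
  let A : (Fin m → Fin 2) → ℝ → ℝ := fun t y =>
    (∑ i : Fin m, ((t i : ℕ) : ℝ) * (((2 : ℕ) : ℝ) ^ ((i : ℕ) + 1))⁻¹) + (((2 : ℕ) : ℝ) ^ m)⁻¹ * y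
  have hA : ∀ z : ℕ → Fin 2, Real.ofDigits z =
      A (fun i => z i) (Real.ofDigits fun i => z (i + m)) := by
    intro z
    rw [Real.ofDigits_eq_sum_add_ofDigits z m, Finset.sum_range]
    rfl
  have hAc : ∀ t, Continuous (A t) := fun t => by fun_prop
  have hAo : ∀ t, IsOpenMap (A t) := fun t =>
    ((Homeomorph.mulLeft₀ ((((2 : ℕ) : ℝ) ^ m)⁻¹) (by positivity)).trans
      (Homeomorph.addLeft
        (∑ i : Fin m, ((t i : ℕ) : ℝ) * (((2 : ℕ) : ℝ) ^ ((i : ℕ) + 1))⁻¹))).isOpenMap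
  let W : Set ℝ := ⋂ t, A t ⁻¹' D
  have hWo : IsOpen W := isOpen_iInter_of_finite fun t => hDo.preimage (hAc t)
  have hWd : Dense W := dense_iInter_of_isOpen (fun t => hDo.preimage (hAc t))
    fun t => hDd.preimage (hAo t)
  obtain ⟨y, hyW, hy⟩ := hWd.exists_between (zero_lt_one' ℝ)
  obtain ⟨s, -, rfl⟩ := Real.ofDigits_SurjOn (b := 2) one_lt_two ⟨hy.1.le, hy.2.le⟩
  obtain ⟨ε, hε, hball⟩ := Metric.isOpen_iff.1 hWo _ hyW
  obtain ⟨l, hl⟩ := exists_pow_lt_of_lt_one hε (by norm_num : ((2 : ℝ)⁻¹) < 1)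
  refine ⟨List.ofFn fun i : Fin l => s i, fun z hz => ?_⟩
  rw [List.length_ofFn] at hz
  have hmem : (Real.ofDigits fun i => z (i + m)) ∈ W := by
    apply hball
    rw [Metric.mem_ball, Real.dist_eq]
    refine (Real.abs_ofDigits_sub_ofDigits_le (n := l) fun i hi => ?_).trans_lt ?_
    · rw [add_comm, hz i hi]
      simp [List.getD, hi]
    · simpa using hl
  rw [hA]
  exact Set.mem_iInter.1 hmem _

/-- Words `w k` written between successive cut points `m k`, each truncated at the next cut point
or padded by zeros up to it. -/
lemma exists_concat {m : ℕ → ℕ} (hm : StrictMono m) (w : ℕ → List (Fin 2)) :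
    ∃ z : ℕ → Fin 2, ∀ k i, m k + i < m (k + 1) → z (m k + i) = (w k).getD i 0 := by
  classical
  refine ⟨fun p => if h : ∃ k, m k ≤ p ∧ p < m (k + 1) then (w h.choose).getD (p - m h.choose) 0
    else 0, fun k i hi => ?_⟩
  have hex : ∃ k', m k' ≤ m k + i ∧ m k + i < m (k' + 1) := ⟨k, by omega, hi⟩
  have huniq : hex.choose = k := by
    obtain ⟨h1, h2⟩ := hex.choose_spec
    have h3 := hm.lt_iff_lt.1 (h1.trans_lt hi)
    have h4 := hm.lt_iff_lt.1 ((Nat.le_add_right (m k) i).trans_lt h2)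
    omega
  simp only [dif_pos hex, huniq, Nat.add_sub_cancel_left]

/-- One half of Bartoszyński's theorem: an infinitely often equal family indexed by `ι` gives a
non-meagre set of reals indexed by `ι × ι`. -/
lemma exists_nonmeagre_of_isIOE {ι : Type*} {f : ι → ℕ → ℕ} (hf : IsIOE f) :
    ∃ r : ι × ι → ℝ, ¬ IsMeagre (Set.range r) := by
  obtain ⟨m, hmono, hm⟩ := hf.exists_cutPoints
  obtain ⟨f', hf'⟩ := hf.exists_on_infinite
  obtain ⟨e, he⟩ := exists_surjective_nat (List (Fin 2))
  choose z hz using fun q : ι × ι => exists_concat (hmono q.1) fun k => e (f' q.2 k)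
  refine ⟨fun q => Real.ofDigits (z q), fun hmeagre => ?_⟩
  obtain ⟨t, htX, htG, htd⟩ := mem_residual.1 (show _ ∈ residual ℝ from hmeagre)
  obtain ⟨D, hDo, rfl⟩ := htG.eq_iInter_nat
  have hDd : ∀ n, Dense (D n) := fun n => htd.mono (Set.iInter_subset _ n)
  choose φ hφ using fun p : ℕ => exists_word (D := ⋂ n : Fin (p + 1), D n)
    (isOpen_iInter_of_finite fun n => hDo n)
    (dense_iInter_of_isOpen (fun n => hDo n) fun n => hDd n) p
  choose c hc using fun p => he (φ p)
  obtain ⟨i, hi⟩ := hm fun p => p + (φ p).length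
  obtain ⟨j, hj⟩ := hf' (fun k => c (m i k)) _ hi
  have hmem : Real.ofDigits (z (i, j)) ∈ ⋂ n, D n := by
    refine Set.mem_iInter.2 fun n => ?_
    obtain ⟨k, ⟨hk, hjk⟩, hnk⟩ := hj.exists_gt n
    have hk : m i k + (φ (m i k)).length ≤ m i (k + 1) := hk
    have hnm : n < m i k + 1 := by
      have := (hmono i).le_apply (x := k)
      omega
    refine Set.mem_iInter.1 (hφ (m i k) (z (i, j)) fun l hl => ?_) ⟨n, hnm⟩
    rw [hz (i, j) k l (by simp only; omega)]
    simp only [hjk, hc]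
  exact htX hmem ⟨(i, j), rfl⟩

/-! ### Families with (C) and without (C₂) -/

/-- A family with (C) and without (C₂) yields an infinitely often equal family with the
same index set. -/
lemma exists_isIOE {Φ : Set (ℕ → ℝ)} (hΦ : ∀ a ∈ Φ, TendsToInfty a)
    (hC : CondC Φ) (hnC2 : ¬ CondCm 2 Φ) : ∃ f : Φ → ℕ → ℕ, IsIOE f := by
  classical
  simp only [CondCm, not_forall, not_exists, not_and, Set.not_infinite] at hnC2
  obtain ⟨x, y, hxy, -, hx, hfin⟩ := hnC2
  choose u hu huI _ using fun k => exists_seq_strictMono_tendsto' (hxy k)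
  -- `V k j` are the disjoint open pieces of `(x k, y k)`.
  let V : ℕ → ℕ → Set ℝ := fun k j => Set.Ioo (u k j) (u k (j + 1))
  have hVsub : ∀ k j, V k j ⊆ Set.Ioo (x k) (y k) := fun k j =>
    Set.Ioo_subset_Ioo (huI k j).1.le (huI k (j + 1)).2.le
  have hVdisj : ∀ k, Pairwise (Function.onFun Disjoint (V k)) := fun k =>
    (hu k).monotone.pairwise_disjoint_on_Ioo_succ
  let f : Φ → ℕ → ℕ := fun a k =>
    if h : ∃ j n, a.1 n ∈ V k j then h.choose else 0
  refine ⟨f, fun g => ?_⟩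
  obtain ⟨a, ha, hinf⟩ := hC (⋃ k, V k (g k)) (isOpen_iUnion fun k => isOpen_Ioo) (by
    rintro ⟨B, hB⟩
    obtain ⟨k, hk⟩ := (hx.eventually_gt_atTop B).exists
    obtain ⟨r, hr⟩ := Set.nonempty_Ioo.2 (hu k (Nat.lt_succ_self (g k)))
    exact absurd (hB (Set.mem_iUnion.2 ⟨k, hr⟩)) (not_le.2 (hk.trans (hVsub k _ hr).1)))
  -- Infinitely many pieces `V k (g k)` are hit, since `a` tends to infinity.
  have hK : {k | ∃ n, a n ∈ V k (g k)}.Infinite := by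
    intro hKfin
    obtain ⟨B, hB⟩ := (hKfin.image y).bddAbove
    obtain ⟨N, hN⟩ := Filter.eventually_atTop.1 (Filter.Tendsto.eventually_gt_atTop (hΦ a ha) B)
    obtain ⟨n, hn, hNn⟩ := hinf.exists_gt N
    obtain ⟨k, hk⟩ := Set.mem_iUnion.1 hn
    exact absurd (hB ⟨k, ⟨n, hk⟩, rfl⟩)
      (not_le.2 ((hN n hNn.le).trans (hVsub k _ hk).2))
  refine ⟨⟨a, ha⟩, (hK.sdiff (hfin a ha)).mono ?_⟩
  rintro k ⟨⟨n, hn⟩, hk⟩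
  have hex : ∃ j n, a n ∈ V k j := ⟨g k, n, hn⟩
  show (if h : ∃ j n, a n ∈ V k j then h.choose else 0) = g k
  rw [dif_pos hex]
  obtain ⟨n', hn'⟩ := hex.choose_spec
  have hnn : n' = n := by
    by_contra hne
    refine hk ⟨{n', n}, (Finset.card_pair hne).ge, fun l hl => ?_⟩
    rcases Finset.mem_insert.1 hl with rfl | hl
    · exact hVsub _ _ hn'
    · rw [Finset.mem_singleton.1 hl]; exact hVsub _ _ hn
  subst hnn
  by_contra hne
  exact Set.disjoint_left.1 (hVdisj k hne) hn' hn

theorem remark6 (Φ : Set (ℕ → ℝ)) (hΦ : ∀ a ∈ Φ, TendsToInfty a)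
    (hC : CondC Φ) (hnC2 : ¬ CondCm 2 Φ) :
    nonMeagreCard ≤ Cardinal.mk Φ := by
  obtain ⟨f, hf⟩ := exists_isIOE hΦ hC hnC2
  obtain ⟨r, hr⟩ := exists_nonmeagre_of_isIOE hf
  have hinf : Infinite Φ := by
    by_contra hfin
    rw [not_infinite_iff_finite] at hfin
    have hX : (Set.range r).Finite := Set.finite_range r
    exact hr (residual_of_dense_open hX.isClosed.isOpen_compl (hX.countable.dense_compl ℝ))
  calc nonMeagreCard ≤ Cardinal.mk (Set.range r) := csInf_le' ⟨_, hr, rfl⟩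
    _ ≤ Cardinal.mk (Φ × Φ) := Cardinal.mk_range_le
    _ = Cardinal.mk Φ := by
      rw [Cardinal.mk_prod, Cardinal.lift_id, Cardinal.mul_eq_self (Cardinal.aleph0_le_mk Φ)]
end

section
/- non(M) equals the smallest cardinality of a family Φ of real sequences converging to ∞ which satisfies condition (C_1) and does not satisfy condition (C_2). That is, the infimum of the cardinals card Φ over all families Φ of sequences tending to ∞ satisfying (C_1) but not (C_2) equals non(M). -/
/-!
The theorem is a variant of Bartoszyński's description of `non(M)` by infinitely often equal reals.

*Upper bound.* For `t : ℝ` let `h t n = n + fract (n * t)`. At most one term of `h t` lies in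
`(k, k + 1/2)`, so no family of such sequences satisfies (C_2). For fixed intervals `(x k, y k)`,
the set of `t` for which `h t` meets infinitely many of them is comeagre (`comeagre_meets`), so
`h '' X` satisfies (C_1) whenever `X` is non-meagre.

*Lower bound.* Let `Φ` satisfy (C_1) but not (C_2), the latter witnessed by `(x k, y k)`. Split each
`(x k, y k)` into countably many pieces and let `F a k` be the number of the piece containing the
term of `a` in `(x k, y k)`, which is unique for large `k`. Applying (C_1) to pieces of a
subsequence of the intervals shows that for each `g` and each infinite `A ⊆ ℕ` some `F a` agrees
with `g` infinitely often on `A` (`exists_matching`).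

Such a family, indexed by `ι`, yields a non-meagre set of reals indexed by `ι × ι`
(`exists_nonmeagre`). Number the rational closed intervals by `ℕ`. Given `(α, β)`, build a
decreasing sequence of such intervals: `F β n` codes a finite table telling which interval to pass
to at step `n`, and a fast growing function `bnd (F α)` bounds the numbers of the intervals that
may be used. Given a meagre set, avoiding it amounts to following infinitely often a strategy `σ`
that enters the `n`-th of a decreasing sequence of dense open sets. A suitable `α` makes the bound
permit the moves of `σ` at infinitely many steps (`bnd_unbounded`), and then a suitable `β` follows
`σ` at infinitely many of those steps. Since `non(M)` is uncountable, `non(M) ≤ (card Φ)²` gives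
`non(M) ≤ card Φ`.
-/

open Filter Set

open Topology

/-! ### The upper bound -/

/-- The sequence `n + fract (n * t)`, whose `n`-th term lies in `[n, n + 1)`. -/
noncomputable def seqOf (t : ℝ) (n : ℕ) : ℝ := n + Int.fract (n * t)

lemma seqOf_tendsto (t : ℝ) : TendsToInfty (seqOf t) := by
  refine tendsto_atTop_mono (fun n => ?_) tendsto_natCast_atTop_atTop
  have := Int.fract_nonneg ((n : ℝ) * t)
  simp only [seqOf]; linarith

lemma eq_of_seqOf_mem {t : ℝ} {n k : ℕ} (h : seqOf t n ∈ Ioo (k : ℝ) (k + 1 / 2)) : n = k := by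
  obtain ⟨h1, h2⟩ := h
  have h3 := Int.fract_nonneg ((n : ℝ) * t)
  have h4 := Int.fract_lt_one ((n : ℝ) * t)
  simp only [seqOf] at h1 h2
  have h5 : (n : ℝ) < k + 1 := by linarith
  have h6 : (k : ℝ) < n + 1 := by linarith
  norm_cast at h5 h6
  omega

lemma not_condCm_two (X : Set ℝ) : ¬ CondCm 2 (seqOf '' X) := by
  intro h
  obtain ⟨a, ⟨t, -, rfl⟩, ha⟩ := h (fun k => k) (fun k => k + 1 / 2) (fun k => by norm_num)
    (fun k => by push_cast; linarith) tendsto_natCast_atTop_atTop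
  obtain ⟨k, s, hs, hk⟩ := ha.nonempty
  obtain ⟨n, hn, m, hm, hnm⟩ := Finset.one_lt_card.1 (show 1 < s.card by omega)
  exact hnm ((eq_of_seqOf_mem (hk n hn)).trans (eq_of_seqOf_mem (hk m hm)).symm)

lemma comeagre_meets (x y : ℕ → ℝ) (hxy : ∀ k, x k < y k) (hx : Tendsto x atTop atTop) :
    {t : ℝ | ∃ᶠ k in atTop, ∃ n, seqOf t n ∈ Ioo (x k) (y k)} ∈ residual ℝ := by
  -- The condition below says that `fract (n * t) = n * t - m` is such that `seqOf t n` lies in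
  -- `(x k, y k)`; it is open in `t` although `fract` is not continuous.
  let U : ℕ → Set ℝ := fun K => {t | ∃ k ≥ K, ∃ n : ℕ, ∃ m : ℤ,
    (n : ℝ) * t - m ∈ Ioo (0 : ℝ) 1 ∧ (n : ℝ) + (n * t - m) ∈ Ioo (x k) (y k)}
  have hopen : ∀ K, IsOpen (U K) := by
    intro K
    have : U K = ⋃ k ≥ K, ⋃ n : ℕ, ⋃ m : ℤ, {t | (n : ℝ) * t - m ∈ Ioo (0 : ℝ) 1 ∧
        (n : ℝ) + (n * t - m) ∈ Ioo (x k) (y k)} := by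
      ext t; simp [U]
    rw [this]
    refine isOpen_iUnion fun k => isOpen_iUnion fun _ => isOpen_iUnion fun n =>
      isOpen_iUnion fun m => ?_
    exact (isOpen_Ioo.preimage (by fun_prop)).inter (isOpen_Ioo.preimage (by fun_prop))
  have hdense : ∀ K, Dense (U K) := by
    intro K
    rw [Metric.dense_iff]
    intro c ε hε
    obtain ⟨N, hN⟩ := exists_nat_gt (1 / ε)
    obtain ⟨k, hkK, hk⟩ : ∃ k ≥ K, (N : ℝ) + 1 ≤ x k :=
      ((eventually_ge_atTop K).and (hx.eventually_ge_atTop ((N : ℝ) + 1))).exists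
    -- A point of `(x k, y k)` that is not an integer.
    obtain ⟨p, hp1, hp2, hp⟩ : ∃ p, x k < p ∧ p < y k ∧ Irrational p := by
      obtain ⟨p, hp, h1, h2⟩ := exists_irrational_btwn (hxy k)
      exact ⟨p, h1, h2, hp⟩
    have hp0 : 0 ≤ p := by
      have : (0 : ℝ) ≤ N := Nat.cast_nonneg _
      linarith
    set n := ⌊p⌋₊ with hn
    have hn1 : (n : ℝ) ≤ p := Nat.floor_le hp0
    have hn2 : p < n + 1 := Nat.lt_floor_add_one p
    have hn3 : (n : ℝ) ≠ p := fun h => hp ⟨n, by simpa using h⟩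
    have hn4 : (n : ℝ) < p := lt_of_le_of_ne hn1 hn3
    have hNn : (N : ℝ) < n := by linarith
    have hnpos : (0 : ℝ) < n := lt_of_le_of_lt (Nat.cast_nonneg _) hNn
    set m : ℤ := ⌊(n : ℝ) * c - (p - n)⌋ with hm
    have hm1 : (m : ℝ) ≤ (n : ℝ) * c - (p - n) := Int.floor_le _
    have hm2 : (n : ℝ) * c - (p - n) < m + 1 := Int.lt_floor_add_one _
    have hmul : (n : ℝ) * ((p - n + m) / n) = p - n + m := by field_simp
    refine ⟨(p - n + m) / n, ?_, k, hkK, n, m, ?_, ?_⟩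
    · rw [Metric.mem_ball, Real.dist_eq, abs_lt]
      have hne : 1 < n * ε := by
        rw [div_lt_iff₀ hε] at hN
        nlinarith
      constructor
      · rw [lt_sub_iff_add_lt, lt_div_iff₀ hnpos]; nlinarith
      · rw [sub_lt_iff_lt_add, div_lt_iff₀ hnpos]; nlinarith
    · rw [hmul]; constructor <;> linarith
    · rw [hmul]; constructor <;> linarith
  have hU : (⋂ K, U K) ∈ residual ℝ :=
    countable_iInter_mem.2 fun K => residual_of_dense_open (hopen K) (hdense K)
  refine mem_of_superset hU fun t ht => ?_
  refine frequently_atTop.2 ?_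
  intro K
  obtain ⟨k, hk, n, m, h1, h2⟩ := mem_iInter.1 ht K
  refine ⟨k, hk, n, ?_⟩
  have : Int.fract ((n : ℝ) * t) = n * t - m :=
    Int.fract_eq_iff.2 ⟨h1.1.le, h1.2, m, by ring⟩
  rwa [seqOf, this]

lemma condCm_one {X : Set ℝ} (hX : ¬ IsMeagre X) : CondCm 1 (seqOf '' X) := by
  intro x y hxy _ hx
  by_contra! hcon
  refine hX (mem_of_superset (comeagre_meets x y hxy hx) fun t ht htX => ?_)
  have hfin := hcon _ (mem_image_of_mem _ htX)
  refine ((Nat.frequently_atTop_iff_infinite.1 ht).mono ?_) hfin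
  rintro k ⟨n, hn⟩
  exact ⟨{n}, by simp, by simpa using hn⟩

/-! ### From a family of sequences to infinitely often equal functions -/

/-- An interval can be split into countably many numbered pieces, each with nonempty interior. -/
lemma exists_pieces (x y : ℝ) (h : x < y) :
    ∃ p : ℝ → ℕ, ∃ c d : ℕ → ℝ, ∀ i, x ≤ c i ∧ c i < d i ∧ d i ≤ y ∧
      ∀ t ∈ Ioo (c i) (d i), p t = i := by
  refine ⟨fun t => ⌊(y - x) / (t - x)⌋₊ - 1, fun i => x + (y - x) / (i + 2),
    fun i => x + (y - x) / (i + 1), fun i => ?_⟩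
  have hd : 0 < y - x := sub_pos.2 h
  have h1 : (0 : ℝ) < i + 1 := by positivity
  have h2 : (0 : ℝ) < i + 2 := by positivity
  refine ⟨by have := div_pos hd h2; linarith, ?_, ?_, ?_⟩
  · have := div_lt_div_of_pos_left hd h1 (show (i : ℝ) + 1 < i + 2 by linarith)
    simp only; linarith
  · have : (y - x) / (i + 1) ≤ y - x := div_le_self hd.le (by linarith [Nat.cast_nonneg (α := ℝ) i])
    linarith
  · rintro t ⟨ht1, ht2⟩
    have h3 : (y - x) / (i + 2) < t - x := by linarith
    have h4 : t - x < (y - x) / (i + 1) := by linarith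
    have h5 : 0 < t - x := (div_pos hd h2).trans h3
    have : ⌊(y - x) / (t - x)⌋₊ = i + 1 := by
      rw [Nat.floor_eq_iff (by positivity)]
      rw [div_lt_iff₀ h2] at h3
      rw [lt_div_iff₀ h1] at h4
      push_cast
      constructor
      · rw [le_div_iff₀ h5]; linarith
      · rw [div_lt_iff₀ h5]; linarith
    simp [this]

/-- The functions `F i` match every `g` infinitely often, even along any prescribed
infinite set `{k | P k}`. -/
def Matching {ι : Type} (F : ι → ℕ → ℕ) : Prop :=
  ∀ P : ℕ → Prop, (∃ᶠ k in atTop, P k) → ∀ g : ℕ → ℕ,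
    ∃ i, ∃ᶠ k in atTop, P k ∧ F i k = g k

lemma exists_matching (Φ : Set (ℕ → ℝ)) (h1 : CondCm 1 Φ) (h2 : ¬ CondCm 2 Φ) :
    ∃ F : Φ → ℕ → ℕ, Matching F := by
  classical
  simp only [CondCm, not_forall, not_exists, not_and, Set.not_infinite] at h2
  obtain ⟨x, y, hxy, hyx, hx, hfin⟩ := h2
  have hmono : StrictMono x := strictMono_nat_of_lt_succ fun k => (hxy k).trans (hyx k)
  choose p c d hpc using fun k => exists_pieces (x k) (y k) (hxy k)
  let F : Φ → ℕ → ℕ := fun a k =>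
    if h : ∃ n, a.1 n ∈ Ioo (x k) (y k) then p k (a.1 h.choose) else 0
  refine ⟨F, fun P hP g => ?_⟩
  obtain ⟨φ, hφ, hPφ⟩ := extraction_of_frequently_atTop hP
  have hxx : Tendsto (fun j => c (φ j) (g (φ j))) atTop atTop :=
    tendsto_atTop_mono (fun j => (hpc (φ j) (g (φ j))).1) (hx.comp hφ.tendsto_atTop)
  obtain ⟨a, haΦ, ha⟩ := h1 (fun j => c (φ j) (g (φ j))) (fun j => d (φ j) (g (φ j)))
    (fun j => (hpc _ _).2.1) (fun j => by
      calc d (φ j) (g (φ j)) ≤ y (φ j) := (hpc _ _).2.2.1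
        _ < x (φ j + 1) := hyx _
        _ ≤ x (φ (j + 1)) := hmono.monotone (hφ (Nat.lt_succ_self j))
        _ ≤ _ := (hpc _ _).1) hxx
  refine ⟨⟨a, haΦ⟩, hφ.tendsto_atTop.frequently ?_⟩
  have huniq : ∀ᶠ k in atTop, ∀ n m, a n ∈ Ioo (x k) (y k) → a m ∈ Ioo (x k) (y k) → n = m := by
    have := not_frequently.1
      (mt Nat.frequently_atTop_iff_infinite.1 (Set.not_infinite.2 (hfin a haΦ)))
    filter_upwards [this] with k hk n m hn hm
    by_contra hnm
    refine hk ⟨{n, m}, (Finset.card_pair hnm).ge, ?_⟩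
    intro q hq
    rcases Finset.mem_insert.1 hq with rfl | hq
    · exact hn
    · rwa [Finset.mem_singleton.1 hq]
  refine ((Nat.frequently_atTop_iff_infinite.2 ha).and_eventually
    (hφ.tendsto_atTop.eventually huniq)).mono ?_
  rintro j ⟨⟨s, hs, hsj⟩, hu⟩
  obtain ⟨n, hn⟩ := Finset.card_pos.1 (show 0 < s.card by omega)
  have hn' := hsj n hn
  have hnI : a n ∈ Ioo (x (φ j)) (y (φ j)) :=
    ⟨(hpc _ _).1.trans_lt hn'.1, hn'.2.trans_le (hpc _ _).2.2.1⟩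
  have hex : ∃ n, a n ∈ Ioo (x (φ j)) (y (φ j)) := ⟨n, hnI⟩
  refine ⟨hPφ j, ?_⟩
  have : hex.choose = n := hu _ _ hex.choose_spec hnI
  simp only [F]
  rw [dif_pos hex, this]
  exact (hpc _ _).2.2.2 _ hn'

/-! ### From infinitely often equal functions to a non-meagre set -/

/-- A strictly increasing function dominating `f`. -/
def bnd (f : ℕ → ℕ) (n : ℕ) : ℕ := n + ∑ i ∈ Finset.range (n + 1), f i

lemma le_bnd (f : ℕ → ℕ) (n : ℕ) : f n ≤ bnd f n :=
  (Finset.single_le_sum (f := f) (fun _ _ => Nat.zero_le _)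
    (Finset.self_mem_range_succ n)).trans (Nat.le_add_left _ _)

lemma self_le_bnd (f : ℕ → ℕ) (n : ℕ) : n ≤ bnd f n := Nat.le_add_right _ _

lemma bnd_le_succ (f : ℕ → ℕ) (n : ℕ) : bnd f n ≤ bnd f (n + 1) := by
  simp only [bnd, Finset.sum_range_succ _ (n + 1)]
  omega

/-- Otherwise every `bnd (F i)`, hence every `F i`, would be eventually at most
`n ↦ S^[n] n`, contradicting that some `F i` equals `n ↦ S^[n] n + 1` infinitely often. -/
lemma bnd_unbounded {ι : Type} {F : ι → ℕ → ℕ} (hF : Matching F) (S : ℕ → ℕ) (hS : Monotone S)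
    (hS' : ∀ n, n ≤ S n) : ∃ i, ∃ᶠ n in atTop, S (bnd (F i) n) ≤ bnd (F i) (n + 1) := by
  obtain ⟨i, hi⟩ := hF (fun _ => True) (Eventually.of_forall fun _ => trivial).frequently
    (fun n => S^[n] n + 1)
  refine ⟨i, fun hcon => ?_⟩
  obtain ⟨N, hN⟩ := eventually_atTop.1 hcon
  have hiter : ∀ k, bnd (F i) (N + k) ≤ S^[k] (bnd (F i) N) := by
    intro k
    induction k with
    | zero => simp
    | succ k ih =>
      rw [Function.iterate_succ_apply', ← add_assoc]
      exact (not_le.1 (hN (N + k) (Nat.le_add_right _ _))).le.trans (hS ih)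
  obtain ⟨n, ⟨-, hn⟩, hnN⟩ :=
    (hi.and_eventually (eventually_ge_atTop (N + bnd (F i) N))).exists
  have h1 := hiter (n - N)
  rw [Nat.add_sub_cancel' (by omega)] at h1
  have h2 : S^[n - N] (bnd (F i) N) ≤ S^[n] n :=
    ((hS.iterate (n - N)) (show bnd (F i) N ≤ n by omega)).trans
      (Function.monotone_iterate_of_id_le (fun m => hS' m) (Nat.sub_le n N) n)
  have h3 := le_bnd (F i) n
  omega

/-- Natural numbers code finite tables of natural numbers. -/
lemma exists_code : ∃ code : ℕ → ℕ → ℕ, ∀ (σ : ℕ → ℕ) (N : ℕ), ∃ c, ∀ p ≤ N, code c p = σ p := by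
  refine ⟨fun c p => (Denumerable.ofNat (List ℕ) c).getD p 0, fun σ N => ?_⟩
  refine ⟨Encodable.encode ((List.range (N + 1)).map σ), fun p hp => ?_⟩
  have : p < N + 1 := by omega
  simp [List.getD, this]

/-- A countable family of closed intervals such that each nonempty open set contains one. -/
lemma exists_intervals : ∃ l r : ℕ → ℝ, (∀ i, l i < r i) ∧
    ∀ U : Set ℝ, IsOpen U → U.Nonempty → ∃ i, Icc (l i) (r i) ⊆ U := by
  have : Nonempty {p : ℚ × ℚ // p.1 < p.2} := ⟨⟨(0, 1), by norm_num⟩⟩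
  obtain ⟨e, he⟩ := exists_surjective_nat {p : ℚ × ℚ // p.1 < p.2}
  refine ⟨fun i => (e i).1.1, fun i => (e i).1.2, fun i => Rat.cast_lt.2 (e i).2, ?_⟩
  rintro U hU ⟨u, hu⟩
  obtain ⟨ε, hε, hball⟩ := Metric.isOpen_iff.1 hU u hu
  obtain ⟨q, hq1, hq2⟩ := exists_rat_btwn (show u < u + ε by linarith)
  obtain ⟨q', hq1', hq2'⟩ := exists_rat_btwn hq2
  obtain ⟨i, hi⟩ := he ⟨(q, q'), by exact_mod_cast hq1'⟩
  refine ⟨i, fun t ht => hball ?_⟩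
  simp only [hi] at ht
  rw [Metric.mem_ball, Real.dist_eq, abs_lt]
  constructor <;> linarith [ht.1, ht.2]

open Classical in
/-- The numbers of the intervals `I` visited when a move proposed by the tables `T` is carried out
if it leads to a subinterval and respects the bound `u`, and is skipped otherwise. -/
noncomputable def visit (I : ℕ → Set ℝ) (u : ℕ → ℕ) (T : ℕ → ℕ → ℕ) : ℕ → ℕ
  | 0 => 0
  | n + 1 => if I (T n (visit I u T n)) ⊆ I (visit I u T n) ∧ T n (visit I u T n) ≤ u (n + 1)
      then T n (visit I u T n) else visit I u T n

lemma visit_succ_subset (I : ℕ → Set ℝ) (u : ℕ → ℕ) (T : ℕ → ℕ → ℕ) (n : ℕ) :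
    I (visit I u T (n + 1)) ⊆ I (visit I u T n) := by
  rw [visit]
  split_ifs with h
  · exact h.1
  · exact Subset.rfl

lemma visit_le (I : ℕ → Set ℝ) (u : ℕ → ℕ) (hu : ∀ n, u n ≤ u (n + 1)) (T : ℕ → ℕ → ℕ) (n : ℕ) :
    visit I u T n ≤ u n := by
  induction n with
  | zero => simp [visit]
  | succ n ih =>
    rw [visit]
    split_ifs with h
    · exact h.2
    · exact ih.trans (hu n)

lemma exists_nonmeagre {ι : Type} {F : ι → ℕ → ℕ} (hF : Matching F) :
    ∃ Y : ι × ι → ℝ, ¬ IsMeagre (range Y) := by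
  obtain ⟨code, hcode⟩ := exists_code
  obtain ⟨l, r, hlr, hbase⟩ := exists_intervals
  set I : ℕ → Set ℝ := fun i => Icc (l i) (r i) with hI
  have hne : ∀ (u : ℕ → ℕ) (T : ℕ → ℕ → ℕ), (⋂ n, I (visit I u T n)).Nonempty := fun u T =>
    IsCompact.nonempty_iInter_of_sequence_nonempty_isCompact_isClosed _
      (visit_succ_subset I u T) (fun n => nonempty_Icc.2 (hlr _).le) isCompact_Icc
      (fun n => isClosed_Icc)
  choose Z hZ using hne
  refine ⟨fun q => Z (bnd (F q.1)) (fun n => code (F q.2 n)), fun hmeagre => ?_⟩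
  obtain ⟨W, hWsub, hWG, hWd⟩ := mem_residual.1 hmeagre
  obtain ⟨D, hDo, hDW⟩ := isGδ_iff_eq_iInter_nat.1 hWG
  -- `E n` is the decreasing sequence of dense open sets to be entered.
  let E : ℕ → Set ℝ := fun n => ⋂ i ∈ Finset.range (n + 1), D i
  have hEo : ∀ n, IsOpen (E n) := fun n => isOpen_biInter_finset fun i _ => hDo i
  have hWE : ∀ n, W ⊆ E n := fun n => by
    rw [hDW]; exact subset_iInter₂ fun i _ => iInter_subset _ i
  have hstep : ∀ n i, ∃ j, I j ⊆ I i ∩ E n := by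
    intro n i
    obtain ⟨j, hj⟩ := hbase (Ioo (l i) (r i) ∩ E n) (isOpen_Ioo.inter (hEo n))
      ((hWd.mono (hWE n)).inter_open_nonempty _ isOpen_Ioo (nonempty_Ioo.2 (hlr i)))
    exact ⟨j, hj.trans (inter_subset_inter_left _ Ioo_subset_Icc_self)⟩
  choose σ hσ using hstep
  let S : ℕ → ℕ := fun m =>
    m + ∑ n ∈ Finset.range (m + 1), ∑ i ∈ Finset.range (m + 1), σ n i
  have hSmono : Monotone S := by
    intro m m' hmm
    have hsub : Finset.range (m + 1) ⊆ Finset.range (m' + 1) :=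
      Finset.range_subset_range.2 (by omega)
    refine add_le_add hmm ((Finset.sum_le_sum_of_subset hsub).trans
      (Finset.sum_le_sum fun n _ => Finset.sum_le_sum_of_subset hsub))
  have hSσ : ∀ m n i, n ≤ m → i ≤ m → σ n i ≤ S m := by
    intro m n i hn hi
    have a1 : σ n i ≤ ∑ i ∈ Finset.range (m + 1), σ n i :=
      Finset.single_le_sum (f := fun i => σ n i) (fun _ _ => Nat.zero_le _)
        (Finset.mem_range.2 (by omega))
    have a2 : ∑ i ∈ Finset.range (m + 1), σ n i ≤
        ∑ n ∈ Finset.range (m + 1), ∑ i ∈ Finset.range (m + 1), σ n i :=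
      Finset.single_le_sum (f := fun n => ∑ i ∈ Finset.range (m + 1), σ n i)
        (fun _ _ => Nat.zero_le _) (Finset.mem_range.2 (by omega))
    exact (a1.trans a2).trans (Nat.le_add_left _ _)
  obtain ⟨α, hα⟩ := bnd_unbounded hF S hSmono (fun n => Nat.le_add_right _ _)
  choose g hg using fun n => hcode (σ n) (bnd (F α) n)
  obtain ⟨β, hβ⟩ := hF _ hα g
  set u := bnd (F α) with hu
  set T : ℕ → ℕ → ℕ := fun n => code (F β n) with hT
  have hz : ∀ n, Z u T ∈ I (visit I u T n) := fun n => mem_iInter.1 (hZ u T) n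
  have hfreq : ∃ᶠ n in atTop, Z u T ∈ E n := by
    refine hβ.mono ?_
    rintro n ⟨hSn, hgn⟩
    have hv : visit I u T n ≤ u n := visit_le I u (bnd_le_succ _) T n
    have hTn : T n (visit I u T n) = σ n (visit I u T n) := by
      simp only [hT, hgn]
      exact hg n _ hv
    have hvis : visit I u T (n + 1) = σ n (visit I u T n) := by
      rw [visit, hTn, if_pos]
      exact ⟨(hσ _ _).trans inter_subset_left, (hSσ (u n) n _ (self_le_bnd _ n) hv).trans hSn⟩
    have := hz (n + 1)
    rw [hvis] at this
    exact (hσ _ _ this).2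
  have hzW : Z u T ∈ W := by
    rw [hDW]
    refine mem_iInter.2 fun i => ?_
    obtain ⟨n, hn, hin⟩ := (hfreq.and_eventually (eventually_ge_atTop i)).exists
    exact mem_iInter₂.1 hn i (Finset.mem_range.2 (by omega))
  exact hWsub hzW ⟨(α, β), rfl⟩

/-! ### Cardinalities -/

lemma nonMeagreCard_le {X : Set ℝ} (hX : ¬ IsMeagre X) : nonMeagreCard ≤ Cardinal.mk X :=
  csInf_le' ⟨X, hX, rfl⟩

lemma exists_nonMeagreCard : ∃ X : Set ℝ, ¬ IsMeagre X ∧ nonMeagreCard = Cardinal.mk X :=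
  csInf_mem (s := {c : Cardinal | ∃ X : Set ℝ, ¬ IsMeagre X ∧ c = Cardinal.mk X})
    ⟨_, univ, not_isMeagre_of_isOpen isOpen_univ univ_nonempty, rfl⟩

lemma aleph0_lt_nonMeagreCard : Cardinal.aleph0 < nonMeagreCard := by
  obtain ⟨X, hX, hcard⟩ := exists_nonMeagreCard
  rw [hcard]
  by_contra! hle
  have hc : X.Countable := Cardinal.le_aleph0_iff_set_countable.1 hle
  refine hX ?_
  have : X = ⋃ x ∈ X, {x} := by simp
  rw [this]
  refine isMeagre_biUnion hc fun x _ => IsNowhereDense.isMeagre ?_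
  simp [IsNowhereDense]

theorem conclusion :
    nonMeagreCard = sInf {c : Cardinal | ∃ Φ : Set (ℕ → ℝ),
      (∀ a ∈ Φ, TendsToInfty a) ∧ CondCm 1 Φ ∧ ¬ CondCm 2 Φ ∧ c = Cardinal.mk Φ} := by
  obtain ⟨X, hX, hcard⟩ := exists_nonMeagreCard
  have hmem : Cardinal.mk (seqOf '' X) ∈ {c : Cardinal | ∃ Φ : Set (ℕ → ℝ),
      (∀ a ∈ Φ, TendsToInfty a) ∧ CondCm 1 Φ ∧ ¬ CondCm 2 Φ ∧ c = Cardinal.mk Φ} :=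
    ⟨seqOf '' X, by rintro _ ⟨t, -, rfl⟩; exact seqOf_tendsto t, condCm_one hX,
      not_condCm_two X, rfl⟩
  refine le_antisymm (le_csInf ⟨_, hmem⟩ ?_) ?_
  · rintro _ ⟨Φ, -, h1, h2, rfl⟩
    obtain ⟨F, hF⟩ := exists_matching Φ h1 h2
    obtain ⟨Y, hY⟩ := exists_nonmeagre hF
    have hle : nonMeagreCard ≤ Cardinal.mk Φ * Cardinal.mk Φ :=
      ((nonMeagreCard_le hY).trans Cardinal.mk_range_le).trans (by rw [Cardinal.mk_prod]; simp)
    rcases le_total Cardinal.aleph0 (Cardinal.mk Φ) with h | h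
    · rwa [Cardinal.mul_eq_self h] at hle
    · exact absurd (hle.trans ((mul_le_mul' h h).trans Cardinal.aleph0_mul_aleph0.le))
        (not_le.2 aleph0_lt_nonMeagreCard)
  · rw [hcard]
    exact (csInf_le' hmem).trans Cardinal.mk_image_le
end
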